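/- arXiv:2109.01027 — 3 statements merged into one kernel-verified Lean document; each statement's English description precedes it below -/
import Mathlib

section
/- There exist constants ε₀ > 0, C > 0 and γ ∈ (0,1), depending only on N, Λ and β, such that the following holds: for every R > 0, every ε with 0 < ε < ε₀R, every bounded Borel measurable f : ℝ^N → ℝ, and every bounded Borel measurable u : ℝ^N → ℝ satisfying, for every x ∈ B_{2R}(0), both u(x) ≤ α sup_{z ∈ B_Λ} (u(x+εz)+u(x−εz))/2 + β ⨍_{B_ε(x)} u(y) dy + ε² |f(x)| and u(x) ≥ α inf_{z ∈ B_Λ} (u(x+εz)+u(x−εz))/2 + β ⨍_{B_ε(x)} u(y) dy − ε² |f(x)| (equivalently, L⁺_ε u ≥ −|f| and L⁻_ε u ≤ |f| on B_{2R}(0)), one has |u(x) − u(z)| ≤ (C / R^γ)( sup_{B_{2R}(0)} |u| + R² sup_{B_{2R}(0)} |f| )( |x − z|^γ + ε^γ ) for all x, z ∈ B_R(0). -/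
open MeasureTheory Metric

noncomputable section

/-- Second difference `δu(x,y) = u(x+y) + u(x−y) − 2u(x)`. -/
def secondDiff (N : ℕ) (u : EuclideanSpace ℝ (Fin N) → ℝ) (x y : EuclideanSpace ℝ (Fin N)) : ℝ :=
  u (x + y) + u (x - y) - 2 * u x

/-- Discrete maximal Pucci-type operator `L⁺_ε`. -/
def LepsPlus (N : ℕ) (Λ α β ε : ℝ) (u : EuclideanSpace ℝ (Fin N) → ℝ)
    (x : EuclideanSpace ℝ (Fin N)) : ℝ :=
  (1 / (2 * ε ^ 2)) *
    (α * sSup ((fun z => secondDiff N u x (ε • z)) '' ball (0 : EuclideanSpace ℝ (Fin N)) Λ) +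
      β * ⨍ y in ball (0 : EuclideanSpace ℝ (Fin N)) 1, secondDiff N u x (ε • y))

/-- Discrete minimal Pucci-type operator `L⁻_ε`. -/
def LepsMinus (N : ℕ) (Λ α β ε : ℝ) (u : EuclideanSpace ℝ (Fin N) → ℝ)
    (x : EuclideanSpace ℝ (Fin N)) : ℝ :=
  (1 / (2 * ε ^ 2)) *
    (α * sInf ((fun z => secondDiff N u x (ε • z)) '' ball (0 : EuclideanSpace ℝ (Fin N)) Λ) +
      β * ⨍ y in ball (0 : EuclideanSpace ℝ (Fin N)) 1, secondDiff N u x (ε • y))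

/-!
Both inequalities say that `u` and `-u` are supersolutions, up to an error of order `ε²`, of a
dynamic programming principle, and the proof is a discrete Krylov–Safonov argument. Slide
paraboloids up to a supersolution from below. The increments of `u` cancel in the difference of
two contact conditions, so a contact point determines the vertex of its paraboloid up to `O(ε)`; a
Vitali covering then bounds the measure of the set of vertices by that of the set where `u < 1`. A
Gaussian barrier turns this estimate into a lower bound for `u` on a whole ball, at every scale
that is large compared with `ε`. At scale `ε` the averaging term alone spreads lower bounds.
Growing ink spots combine the two: a nonnegative supersolution that is at least `1/2` on half of a
ball is bounded below on that ball. Applied to whichever of `u` and `1 - u` is large on half of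
the ball, this makes the oscillation of `u` decay by a fixed factor from one scale to the next, as
long as the scale exceeds a multiple of `ε`, where the iteration stops and leaves the error `ε^γ`.
-/

open Module Set

section Averages

theorem setAverage_mono_on {X : Type*} [MeasurableSpace X] {μ : Measure X} {s : Set X}
    {f g : X → ℝ} (hf : IntegrableOn f s μ) (hg : IntegrableOn g s μ) (hs : MeasurableSet s)
    (hfg : ∀ x ∈ s, f x ≤ g x) : ⨍ x in s, f x ∂μ ≤ ⨍ x in s, g x ∂μ := by
  simp only [setAverage_eq, smul_eq_mul]
  exact mul_le_mul_of_nonneg_left (setIntegral_mono_on hf hg hs hfg) (by positivity)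

theorem measure_le_two_mul_of_setAverage_le {X : Type*} [MeasurableSpace X] {μ : Measure X}
    {s : Set X} {f : X → ℝ} {l : ℝ} (hf : IntegrableOn f s μ) (hs : MeasurableSet s)
    (hs_top : μ s ≠ ⊤) (hf₀ : ∀ x ∈ s, 0 ≤ f x) (hl : 0 < l) (hfl : ⨍ x in s, f x ∂μ ≤ l / 2) :
    μ s ≤ 2 * μ ({x | f x < l} ∩ s) := by
  have markov : l * (μ.restrict s).real {x | l ≤ f x} ≤ ∫ x in s, f x ∂μ :=
    mul_meas_ge_le_integral_of_nonneg ((ae_restrict_iff' hs).2 (.of_forall hf₀)) hf l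
  have integral_eq : ∫ x in s, f x ∂μ = μ.real s * ⨍ x in s, f x ∂μ := by
    rw [← smul_eq_mul, measure_smul_setAverage f hs_top]
  have upper_le : 2 * (μ.restrict s).real {x | l ≤ f x} ≤ μ.real s := by
    rw [integral_eq] at markov
    have : μ.real s * ⨍ x in s, f x ∂μ ≤ μ.real s * (l / 2) := by gcongr
    exact le_of_mul_le_mul_left (by linarith) hl
  have cover : μ.real s ≤ μ.real ({x | l ≤ f x} ∩ s) + μ.real ({x | f x < l} ∩ s) := by
    have subset : s ⊆ {x | l ≤ f x} ∩ s ∪ {x | f x < l} ∩ s := fun x hx =>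
      (le_or_gt l (f x)).imp (⟨·, hx⟩) (⟨·, hx⟩)
    have union_ne_top : μ ({x | l ≤ f x} ∩ s ∪ {x | f x < l} ∩ s) ≠ ⊤ :=
      measure_ne_top_of_subset (union_subset inter_subset_right inter_subset_right) hs_top
    exact (measureReal_mono subset union_ne_top).trans (measureReal_union_le _ _)
  rw [measureReal_restrict_apply' hs] at upper_le
  rw [← ofReal_measureReal hs_top,
    ← ofReal_measureReal (measure_ne_top_of_subset inter_subset_right hs_top),
    ← ENNReal.ofReal_ofNat, ← ENNReal.ofReal_mul zero_le_two]
  exact ENNReal.ofReal_le_ofReal (by linarith)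

theorem measureReal_ball_pos {X : Type*} [PseudoMetricSpace X] [ProperSpace X]
    [MeasurableSpace X] {μ : Measure X} [IsFiniteMeasureOnCompacts μ] [μ.IsOpenPosMeasure]
    (x : X) {r : ℝ} (hr : 0 < r) : 0 < μ.real (ball x r) :=
  ENNReal.toReal_pos (measure_ball_pos μ x hr).ne' measure_ball_lt_top.ne

theorem integrableOn_ball_of_locallyIntegrable {X : Type*} [PseudoMetricSpace X] [ProperSpace X]
    [MeasurableSpace X] {μ : Measure X} {u : X → ℝ} (hu : LocallyIntegrable u μ) (x : X) (r : ℝ) :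
    IntegrableOn u (ball x r) μ :=
  (hu.integrableOn_isCompact (isCompact_closedBall x r)).mono_set ball_subset_closedBall

variable {E : Type*} [NormedAddCommGroup E] [NormedSpace ℝ E] [FiniteDimensional ℝ E]
  [MeasurableSpace E] [BorelSpace E] {μ : Measure E} [μ.IsAddHaarMeasure] {u g : E → ℝ}

theorem measureReal_ball_mul (x y : E) {a : ℝ} (ha : 0 < a) (r : ℝ) :
    μ.real (ball x (a * r)) = a ^ finrank ℝ E * μ.real (ball y r) := by
  simp only [measureReal_def, Measure.addHaar_ball_mul_of_pos μ x ha r,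
    Measure.addHaar_ball_center μ y r, ENNReal.toReal_mul,
    ENNReal.toReal_ofReal (pow_nonneg ha.le _)]

theorem measureReal_ball_eq_pow_mul (x : E) {r : ℝ} (hr : 0 < r) :
    μ.real (ball x r) = r ^ finrank ℝ E * μ.real (ball (0 : E) 1) := by
  rw [← measureReal_ball_mul x 0 hr, mul_one]

theorem measure_closedBall_mul (x y : E) {a r : ℝ} (ha : 0 ≤ a) (hr : 0 < r) :
    μ (closedBall x (a * r)) = ENNReal.ofReal (a ^ finrank ℝ E) * μ (ball y r) := by
  rw [Measure.addHaar_closedBall μ x (mul_nonneg ha hr.le), Measure.addHaar_ball_of_pos μ y hr,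
    mul_pow, ENNReal.ofReal_mul (pow_nonneg ha _), mul_assoc]

theorem locallyIntegrable_comp_add_smul (hu : LocallyIntegrable u μ) (x : E) {r : ℝ}
    (hr : r ≠ 0) : LocallyIntegrable (fun q => u (x + r • q)) μ := by
  have injective : Function.Injective fun q : E => x + r • q := fun p q hpq =>
    smul_right_injective E hr (add_left_cancel hpq)
  refine locallyIntegrable_iff.2 fun K hK => ?_
  have image_integrable : IntegrableOn u ((fun q => x + r • q) '' K) μ :=
    hu.integrableOn_isCompact (hK.image (by fun_prop))
  rw [← integrable_indicator_iff (hK.image (by fun_prop)).measurableSet] at image_integrable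
  rw [← integrable_indicator_iff hK.measurableSet, ← injective.preimage_image K]
  exact (image_integrable.comp_add_left x).comp_smul hr

open scoped Pointwise in
theorem setAverage_comp_add_smul (g : E → ℝ) (x p : E) {r : ℝ} (hr : r ≠ 0) (s : ℝ) :
    ⨍ q in ball p s, g (x + r • q) ∂μ = ⨍ y in ball (x + r • p) (|r| * s), g y ∂μ := by
  have preimage_eq : r • ball p s = (x + ·) ⁻¹' ball (x + r • p) (|r| * s) := by
    rw [_root_.smul_ball hr, preimage_add_ball, add_sub_cancel_left, Real.norm_eq_abs]
  have translate : ∫ y in r • ball p s, g (x + y) ∂μ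
      = ∫ y in ball (x + r • p) (|r| * s), g y ∂μ := by
    rw [preimage_eq]
    exact (measurePreserving_add_left μ x).setIntegral_preimage_emb
      (MeasurableEquiv.addLeft x).measurableEmbedding g _
  rw [setAverage_eq, setAverage_eq, Measure.setIntegral_comp_smul μ (fun y => g (x + y)) _ hr,
    translate, measureReal_ball_mul (x + r • p) p (abs_pos.2 hr) s, smul_smul, abs_inv, abs_pow,
    mul_inv_rev]

theorem setAverage_ball_eq_setAverage_midpoint (hu : LocallyIntegrable u μ) (x : E) (ε : ℝ) :
    ⨍ y in ball x ε, u y ∂μ = ⨍ h in ball 0 ε, (u (x + h) + u (x - h)) / 2 ∂μ := by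
  have average_add : ⨍ h in ball 0 ε, u (x + h) ∂μ = ⨍ y in ball x ε, u y ∂μ := by
    simpa using setAverage_comp_add_smul (μ := μ) u x 0 one_ne_zero ε
  have average_sub : ⨍ h in ball 0 ε, u (x - h) ∂μ = ⨍ y in ball x ε, u y ∂μ := by
    simpa [← sub_eq_add_neg] using
      setAverage_comp_add_smul (μ := μ) u x 0 (neg_ne_zero.2 one_ne_zero) ε
  have integrable_add : IntegrableOn (fun h => u (x + h)) (ball 0 ε) μ := by
    simpa using integrableOn_ball_of_locallyIntegrable
      (locallyIntegrable_comp_add_smul hu x one_ne_zero) 0 ε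
  have integrable_sub : IntegrableOn (fun h => u (x - h)) (ball 0 ε) μ := by
    simpa [← sub_eq_add_neg] using integrableOn_ball_of_locallyIntegrable
      (locallyIntegrable_comp_add_smul hu x (neg_ne_zero.2 one_ne_zero)) 0 ε
  simp only [setAverage_eq, smul_eq_mul] at average_add average_sub ⊢
  rw [integral_div, integral_add integrable_add integrable_sub]
  linarith

theorem locallyIntegrable_midpoint (hu : LocallyIntegrable u μ) (x : E) :
    LocallyIntegrable (fun h => (u (x + h) + u (x - h)) / 2) μ := by
  have locallyIntegrable_add := locallyIntegrable_comp_add_smul hu x one_ne_zero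
  have locallyIntegrable_sub :=
    locallyIntegrable_comp_add_smul hu x (neg_ne_zero.2 (one_ne_zero (α := ℝ)))
  refine ((locallyIntegrable_add.add locallyIntegrable_sub).smul (2⁻¹ : ℝ)).congr
    (.of_forall fun h => ?_)
  simp [sub_eq_add_neg, div_eq_inv_mul, mul_add]

theorem setAverage_ball_le_of_midpoint_le {x : E} {ε b : ℝ} (hε : 0 < ε)
    (hg : LocallyIntegrable g μ) (hu : LocallyIntegrable u μ)
    (hgu : ∀ h ∈ ball (0 : E) ε, (g (x + h) + g (x - h)) / 2 ≤ (u (x + h) + u (x - h)) / 2 + b) :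
    ⨍ y in ball x ε, g y ∂μ ≤ (⨍ y in ball x ε, u y ∂μ) + b := by
  rw [setAverage_ball_eq_setAverage_midpoint hg, setAverage_ball_eq_setAverage_midpoint hu]
  have hb : IntegrableOn (fun _ : E => b) (ball 0 ε) μ := integrableOn_const measure_ball_lt_top.ne
  have integrable_g := integrableOn_ball_of_locallyIntegrable (locallyIntegrable_midpoint hg x) 0 ε
  have integrable_u := integrableOn_ball_of_locallyIntegrable (locallyIntegrable_midpoint hu x) 0 ε
  refine (setAverage_mono_on integrable_g (integrable_u.add hb) measurableSet_ball hgu).trans_eq ?_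
  have pos := measureReal_ball_pos (μ := μ) 0 hε
  simp only [setAverage_eq, smul_eq_mul]
  rw [integral_add' integrable_u hb, setIntegral_const, smul_eq_mul, mul_add,
    inv_mul_cancel_left₀ pos.ne']

theorem setAverage_ball_eq_of_midpoint_eq {x : E} {ε c : ℝ} (hε : 0 < ε)
    (hg : LocallyIntegrable g μ) (hgc : ∀ h ∈ ball (0 : E) ε, (g (x + h) + g (x - h)) / 2 = c) :
    ⨍ y in ball x ε, g y ∂μ = c := by
  rw [setAverage_ball_eq_setAverage_midpoint hg, setAverage_congr_fun measurableSet_ball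
    (.of_forall hgc)]
  exact setAverage_const (measure_ball_pos μ 0 hε).ne' measure_ball_lt_top.ne c

theorem pow_mul_setAverage_le_of_ball_subset {x z : E} {r s : ℝ} (hr : 0 < r) (hs : 0 < s)
    (hg : IntegrableOn g (ball x r) μ) (hg₀ : ∀ y ∈ ball x r, 0 ≤ g y)
    (hz : ball z s ⊆ ball x r) :
    (s / r) ^ finrank ℝ E * ⨍ y in ball z s, g y ∂μ ≤ ⨍ y in ball x r, g y ∂μ := by
  have integral_le : ∫ y in ball z s, g y ∂μ ≤ ∫ y in ball x r, g y ∂μ :=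
    setIntegral_mono_set hg ((ae_restrict_iff' measurableSet_ball).2 (.of_forall hg₀))
      (.of_forall hz)
  have measure_eq : μ.real (ball z s) = (s / r) ^ finrank ℝ E * μ.real (ball x r) := by
    rw [← measureReal_ball_mul z x (by positivity) r, div_mul_cancel₀ _ hr.ne']
  have pos := measureReal_ball_pos (μ := μ) x hr
  rw [setAverage_eq, setAverage_eq, smul_eq_mul, smul_eq_mul, measure_eq, mul_inv,
    ← mul_assoc, mul_inv_cancel_left₀ (by positivity)]
  gcongr

end Averages

section Supersolution

variable {E : Type*} [NormedAddCommGroup E] [MeasurableSpace E]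
  {μ : Measure E} {Λ β ε ρ : ℝ} {u g : E → ℝ} {x : E}

variable (μ Λ β ε ρ u x) in
/-- The function `u` satisfies at `x` the inequality
`(1 - β) inf_{|h| < Λ ε} (u (x + h) + u (x - h)) / 2 + β ⨍_{B_ε(x)} u ≤ u x + ρ` expressing
`L⁻_ε u ≤ ρ / ε²`. The infimum enters through its lower bounds `m`. -/
def IsSupersolutionAt : Prop :=
  ∀ m : ℝ, (∀ h ∈ ball (0 : E) (Λ * ε), m ≤ (u (x + h) + u (x - h)) / 2) →
    (1 - β) * m + β * ⨍ y in ball x ε, u y ∂μ ≤ u x + ρ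

namespace IsSupersolutionAt

theorem mono {ρ' : ℝ} (h : IsSupersolutionAt μ Λ β ε ρ u x) (hρ : ρ ≤ ρ') :
    IsSupersolutionAt μ Λ β ε ρ' u x :=
  fun m hm => (h m hm).trans (by linarith)

variable [NormedSpace ℝ E] [FiniteDimensional ℝ E] [BorelSpace E] [μ.IsAddHaarMeasure]

theorem rescale {x₀ p : E} {r w : ℝ} (hε : 0 < ε) (hr : 0 < r) (hw : 0 < w) (a : ℝ)
    (hu : LocallyIntegrable u μ) (h : IsSupersolutionAt μ Λ β ε ρ u (x₀ + r • p)) :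
    IsSupersolutionAt μ Λ β (ε / r) (ρ / w) (fun q => (u (x₀ + r • q) - a) / w) p := by
  intro m hm
  have lower_bound : ∀ k ∈ ball (0 : E) (Λ * ε),
      w * m + a ≤ (u (x₀ + r • p + k) + u (x₀ + r • p - k)) / 2 := by
    intro k hk
    have hk' : r⁻¹ • k ∈ ball (0 : E) (Λ * (ε / r)) := by
      rw [mem_ball_zero_iff] at hk ⊢
      rw [norm_smul, norm_inv, Real.norm_of_nonneg hr.le, inv_mul_lt_iff₀ hr]
      exact hk.trans_eq (by field_simp)
    have := hm _ hk'
    simp only [smul_add, smul_sub, smul_inv_smul₀ hr.ne', ← add_assoc, ← add_sub_assoc] at this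
    calc w * m + a
        ≤ w * (((u (x₀ + r • p + k) - a) / w + (u (x₀ + r • p - k) - a) / w) / 2) + a := by gcongr
      _ = _ := by field_simp; ring
  have average_eq : ⨍ q in ball p (ε / r), (u (x₀ + r • q) - a) / w ∂μ
      = ((⨍ y in ball (x₀ + r • p) ε, u y ∂μ) - a) / w := by
    have pos := measureReal_ball_pos (μ := μ) p (div_pos hε hr)
    have integrable := integrableOn_ball_of_locallyIntegrable
      (locallyIntegrable_comp_add_smul hu x₀ hr.ne') p (ε / r)
    have radius_eq : ε = |r| * (ε / r) := by rw [abs_of_pos hr, mul_div_cancel₀ _ hr.ne']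
    rw [radius_eq, ← setAverage_comp_add_smul u x₀ p hr.ne', ← radius_eq]
    simp only [setAverage_eq, smul_eq_mul, integral_div]
    rw [integral_sub integrable (integrableOn_const measure_ball_lt_top.ne), setIntegral_const,
      smul_eq_mul]
    field_simp
  rw [average_eq]
  have := h _ lower_bound
  calc (1 - β) * m + β * (((⨍ y in ball (x₀ + r • p) ε, u y ∂μ) - a) / w)
      = ((1 - β) * (w * m + a) + β * (⨍ y in ball (x₀ + r • p) ε, u y ∂μ) - a) / w := by
        field_simp; ring
    _ ≤ (u (x₀ + r • p) + ρ - a) / w := by gcongr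
    _ = (u (x₀ + r • p) - a) / w + ρ / w := by ring

theorem mul_setAverage_le {b : ℝ} (h : IsSupersolutionAt μ Λ β ε ρ u x) (hΛ : 1 ≤ Λ)
    (hβ : 0 ≤ β) (hε : 0 < ε) (hu : LocallyIntegrable u μ) (hg : LocallyIntegrable g μ)
    (hg₀ : ∀ y ∈ ball x (Λ * ε), 0 ≤ g y)
    (hgu : ∀ h ∈ ball (0 : E) (Λ * ε),
      (g (x + h) + g (x - h)) / 2 ≤ (u (x + h) + u (x - h)) / 2 - u x + b) :
    β * ⨍ y in ball x ε, g y ∂μ ≤ ρ + b := by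
  have dpp := h (u x - b) fun k hk => by
    have add_nonneg := hg₀ (x + k) (by simpa [mem_ball_iff_norm] using hk)
    have sub_nonneg := hg₀ (x - k) (by simpa [mem_ball_iff_norm] using hk)
    linarith [hgu k hk]
  have average_le : ⨍ y in ball x ε, g y ∂μ ≤ (⨍ y in ball x ε, u y ∂μ) + (b - u x) :=
    setAverage_ball_le_of_midpoint_le hε hg hu fun k hk => by
      linarith [hgu k (ball_subset_ball (le_mul_of_one_le_left hε.le hΛ) hk)]
  linarith [mul_le_mul_of_nonneg_left average_le hβ]

theorem mul_setAverage_ball_le {z : E} {s : ℝ} (h : IsSupersolutionAt μ Λ β ε ρ u x) (hΛ : 1 ≤ Λ)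
    (hβ : 0 ≤ β) (hε : 0 < ε) (hs : 0 < s) (hu : LocallyIntegrable u μ)
    (hu₀ : ∀ y ∈ ball x (Λ * ε), 0 ≤ u y) (hz : ball z s ⊆ ball x ε) :
    β * ((s / ε) ^ finrank ℝ E * ⨍ y in ball z s, u y ∂μ) ≤ u x + ρ := by
  have dpp := h 0 fun k hk => by
    have add_nonneg := hu₀ (x + k) (by simpa [mem_ball_iff_norm] using hk)
    have sub_nonneg := hu₀ (x - k) (by simpa [mem_ball_iff_norm] using hk)
    linarith
  have subset := ball_subset_ball (x := x) (le_mul_of_one_le_left hε.le hΛ)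
  have sub_average_le := pow_mul_setAverage_le_of_ball_subset hε hs
    (integrableOn_ball_of_locallyIntegrable hu x ε) (fun y hy => hu₀ y (subset hy)) hz
  linarith [mul_le_mul_of_nonneg_left sub_average_le hβ]

end IsSupersolutionAt

end Supersolution

section Covering

theorem exists_countable_subfamily_cover_tsum_measure_le {X ι : Type*} [MetricSpace X]
    [SecondCountableTopology X] [MeasurableSpace X] [OpensMeasurableSpace X] (μ : Measure X)
    {T : Set ι} {c : ι → X} {r : ι → ℝ} {R : ℝ} {S : Set X} {C : ENNReal}
    (hr : ∀ a ∈ T, 0 < r a) (hR : ∀ a ∈ T, r a ≤ R) (hS : MeasurableSet S)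
    (hC : ∀ a ∈ T, μ (ball (c a) (r a)) ≤ C * μ (S ∩ ball (c a) (r a))) :
    ∃ v ⊆ T, v.Countable ∧
      (∀ a ∈ T, ∃ b ∈ v, closedBall (c a) (r a) ⊆ closedBall (c b) (5 * r b)) ∧
      ∑' b : v, μ (ball (c b) (r b)) ≤ C * μ (S ∩ ⋃ a ∈ T, ball (c a) (r a)) := by
  obtain ⟨v, hvT, disjoint, cover⟩ :=
    Vitali.exists_disjoint_subfamily_covering_enlargement_closedBall T c r R hR 5 (by norm_num)
  have countable : v.Countable := disjoint.countable_of_nonempty_interior fun a ha =>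
    ⟨c a, ball_subset_interior_closedBall (mem_ball_self (hr a (hvT ha)))⟩
  refine ⟨v, hvT, countable, cover, ?_⟩
  have pieces_disjoint : v.PairwiseDisjoint fun b => S ∩ ball (c b) (r b) :=
    disjoint.mono fun _ _ hb => ball_subset_closedBall hb.2
  calc ∑' b : v, μ (ball (c b) (r b))
      ≤ ∑' b : v, C * μ (S ∩ ball (c b) (r b)) := ENNReal.tsum_le_tsum fun b => hC b (hvT b.2)
    _ = C * μ (⋃ b ∈ v, S ∩ ball (c b) (r b)) := by
        rw [ENNReal.tsum_mul_left,
          measure_biUnion countable pieces_disjoint fun b _ => hS.inter measurableSet_ball]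
    _ ≤ C * μ (S ∩ ⋃ a ∈ T, ball (c a) (r a)) := by
        gcongr
        exact iUnion₂_subset fun b hb => inter_subset_inter_right S
          (subset_biUnion_of_mem (u := fun a => ball (c a) (r a)) (hvT hb))

theorem measure_le_mul_measure_inter_biUnion_ball {E : Type*} [NormedAddCommGroup E]
    [NormedSpace ℝ E] [FiniteDimensional ℝ E] [MeasurableSpace E] [BorelSpace E] {μ : Measure E}
    [μ.IsAddHaarMeasure] {A S : Set E} {X : E → E} {s K : ℝ} {C : ENNReal} (hs : 0 < s)
    (hK : 0 ≤ K) (hS : MeasurableSet S)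
    (hC : ∀ y ∈ A, μ (ball (X y) s) ≤ C * μ (S ∩ ball (X y) s))
    (hX : ∀ y ∈ A, ∀ y' ∈ A, dist (X y) (X y') ≤ 5 * s → dist y y' ≤ K * s) :
    μ A ≤ ENNReal.ofReal (K ^ finrank ℝ E) * (C * μ (S ∩ ⋃ y ∈ A, ball (X y) s)) := by
  obtain ⟨v, hv, countable, cover, tsum_le⟩ := exists_countable_subfamily_cover_tsum_measure_le μ
    (fun _ _ => hs) (fun _ _ => le_rfl) hS hC
  have cover' : A ⊆ ⋃ b ∈ v, closedBall b (K * s) := fun y hy => by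
    obtain ⟨b, hb, hyb⟩ := cover y hy
    exact mem_biUnion hb (hX y hy b (hv hb) (hyb (mem_closedBall_self hs.le)))
  calc μ A ≤ ∑' b : v, μ (closedBall b.1 (K * s)) :=
        (measure_mono cover').trans (measure_biUnion_le μ countable _)
    _ = ENNReal.ofReal (K ^ finrank ℝ E) * ∑' b : v, μ (ball (X b) s) := by
        rw [← ENNReal.tsum_mul_left]
        exact tsum_congr fun b => measure_closedBall_mul b.1 (X b) hK hs
    _ ≤ _ := by gcongr

end Covering

theorem exists_mem_forall_le_add {X : Type*} {A : Set X} {w : X → ℝ} (hA : A.Nonempty)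
    (hw : BddBelow (w '' A)) {η : ℝ} (hη : 0 < η) : ∃ x ∈ A, ∀ p ∈ A, w x ≤ w p + η := by
  obtain ⟨_, ⟨x, hx, rfl⟩, hlt⟩ := Real.lt_sInf_add_pos (hA.image w) hη
  exact ⟨x, hx, fun p hp => hlt.le.trans (by gcongr; exact csInf_le hw (mem_image_of_mem w hp))⟩

section SlidingParaboloids

variable {E : Type*} [NormedAddCommGroup E] {u : E → ℝ} {ε : ℝ}

/-- The amount by which `u` exceeds at `p` the paraboloid of vertex `y` that passes through
`(x, u x - ε²)`. The point `x` is regarded as a contact point of this paraboloid when the gap is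
nonnegative near `x`; the term `ε²` makes contact points exist although `u` need not attain its
infimum. -/
def contactGap (u : E → ℝ) (ε : ℝ) (x y p : E) : ℝ :=
  u p + ‖p - y‖ ^ 2 - (u x + ‖x - y‖ ^ 2) + ε ^ 2

theorem exists_contactGap_nonneg {Λ : ℝ} (hε : 0 < ε) (hΛ : 1 ≤ Λ) (hΛε : Λ * ε ≤ 1 / 8)
    (hu₀ : ∀ x ∈ ball (0 : E) 1, 0 ≤ u x) {x₁ y : E} (hx₁ : x₁ ∈ ball (0 : E) (1 / 4))
    (hux₁ : u x₁ < 1 / 16) (hy : y ∈ ball (0 : E) (1 / 4)) :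
    ∃ x ∈ ball (0 : E) (7 / 8), u x + ‖x - y‖ ^ 2 ≤ 1 / 2 ∧
      ∀ p ∈ ball x (Λ * ε), 0 ≤ contactGap u ε x y p := by
  obtain ⟨x, hx, near_min⟩ := exists_mem_forall_le_add (A := ball (0 : E) 1)
    (w := fun p => u p + ‖p - y‖ ^ 2) ⟨0, mem_ball_self one_pos⟩
    ⟨0, forall_mem_image.2 fun p hp => add_nonneg (hu₀ p hp) (sq_nonneg _)⟩ (pow_pos hε 2)
  rw [mem_ball_zero_iff] at hx₁ hy
  have ε_small : ε ^ 2 ≤ (1 / 8) ^ 2 := by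
    gcongr; exact (le_mul_of_one_le_left hε.le hΛ).trans hΛε
  have dist_x₁ : ‖x₁ - y‖ ^ 2 ≤ (1 / 2) ^ 2 := by
    gcongr; linarith [norm_sub_le x₁ y]
  have low : u x + ‖x - y‖ ^ 2 ≤ 21 / 64 := by
    linarith [near_min x₁ (by rw [mem_ball_zero_iff]; linarith)]
  have dist_x : ‖x - y‖ < 5 / 8 := lt_of_pow_lt_pow_left₀ 2 (by norm_num) (by
    linarith [hu₀ x hx])
  have hx' : ‖x‖ < 7 / 8 := by
    linarith [norm_add_le (x - y) y, congrArg norm (sub_add_cancel x y)]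
  refine ⟨x, mem_ball_zero_iff.2 hx', by linarith, fun p hp => ?_⟩
  have hp' : p ∈ ball (0 : E) 1 := ball_subset_ball' (by rw [dist_zero_right]; linarith) hp
  simp only [contactGap]
  linarith [near_min p hp']

variable [InnerProductSpace ℝ E]

theorem contactGap_midpoint (u : E → ℝ) (ε : ℝ) (x y h : E) :
    (contactGap u ε x y (x + h) + contactGap u ε x y (x - h)) / 2
      = (u (x + h) + u (x - h)) / 2 - u x + (‖h‖ ^ 2 + ε ^ 2) := by
  have parallelogram := parallelogram_law_with_norm ℝ (x - y) h
  rw [← add_sub_right_comm, sub_right_comm] at parallelogram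
  simp only [contactGap]
  linarith

variable [FiniteDimensional ℝ E] [MeasurableSpace E] [BorelSpace E] {μ : Measure E}
  [μ.IsAddHaarMeasure]

theorem locallyIntegrable_contactGap (hu : LocallyIntegrable u μ) (ε : ℝ) (x y : E) :
    LocallyIntegrable (contactGap u ε x y) μ := by
  have paraboloid : Continuous fun p => ‖p - y‖ ^ 2 - (u x + ‖x - y‖ ^ 2) + ε ^ 2 := by fun_prop
  refine (hu.add paraboloid.locallyIntegrable).congr (.of_forall fun p => ?_)
  simp only [Pi.add_apply, contactGap]
  ring

theorem setAverage_contactGap_le {Λ β : ℝ} {x y : E} (hΛ : 1 ≤ Λ) (hβ : 0 < β) (hε : 0 < ε)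
    (hu : LocallyIntegrable u μ) (h : IsSupersolutionAt μ Λ β ε (ε ^ 2) u x)
    (hxy : ∀ p ∈ ball x (Λ * ε), 0 ≤ contactGap u ε x y p) :
    ⨍ p in ball x ε, contactGap u ε x y p ∂μ ≤ (Λ ^ 2 + 2) / β * ε ^ 2 := by
  have bound := h.mul_setAverage_le (b := (Λ * ε) ^ 2 + ε ^ 2) hΛ hβ.le hε hu
    (locallyIntegrable_contactGap hu ε x y) hxy fun k hk => by
      rw [contactGap_midpoint]
      gcongr
      exact (mem_ball_zero_iff.1 hk).le
  rw [div_mul_eq_mul_div, le_div_iff₀' hβ]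
  linarith

theorem contactGap_sub_contactGap_le {c : ℝ} {x₁ x₂ y₁ y₂ z : E} (hε : 0 < ε)
    (hu : LocallyIntegrable u μ) (hz₁ : ball z (ε / 4) ⊆ ball x₁ ε)
    (hz₂ : ball z (ε / 4) ⊆ ball x₂ ε) (h₁ : ∀ p ∈ ball x₁ ε, 0 ≤ contactGap u ε x₁ y₁ p)
    (h₂ : ∀ p ∈ ball x₂ ε, 0 ≤ contactGap u ε x₂ y₂ p)
    (hc : ⨍ p in ball x₁ ε, contactGap u ε x₁ y₁ p ∂μ ≤ c) :
    contactGap u ε x₁ y₁ z - contactGap u ε x₂ y₂ z ≤ 4 ^ finrank ℝ E * c := by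
  have lint₁ := locallyIntegrable_contactGap hu ε x₁ y₁
  have lint := lint₁.sub (locallyIntegrable_contactGap hu ε x₂ y₂)
  have quarter_pos : 0 < ε / 4 := by positivity
  -- The function `u` cancels in the difference of two gaps, which is affine.
  have mean_value : ⨍ p in ball z (ε / 4),
      (contactGap u ε x₁ y₁ - contactGap u ε x₂ y₂) p ∂μ
        = contactGap u ε x₁ y₁ z - contactGap u ε x₂ y₂ z := by
    refine setAverage_ball_eq_of_midpoint_eq quarter_pos lint fun h _ => ?_
    have parallelogram (y : E) : ‖z + h - y‖ ^ 2 + ‖z - h - y‖ ^ 2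
        = 2 * (‖z - y‖ ^ 2 + ‖h‖ ^ 2) := by
      have := parallelogram_law_with_norm ℝ (z - y) h
      rw [← add_sub_right_comm, sub_right_comm] at this
      linarith
    simp only [Pi.sub_apply, contactGap]
    linarith [parallelogram y₁, parallelogram y₂]
  have drop_gap₂ := setAverage_mono_on (integrableOn_ball_of_locallyIntegrable lint z (ε / 4))
    (integrableOn_ball_of_locallyIntegrable lint₁ z (ε / 4)) measurableSet_ball
    fun p hp => sub_le_self _ (h₂ p (hz₂ hp))
  have enlarge := pow_mul_setAverage_le_of_ball_subset hε quarter_pos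
    (integrableOn_ball_of_locallyIntegrable lint₁ x₁ ε) h₁ hz₁
  rw [div_right_comm, div_self hε.ne', one_div, inv_pow, inv_mul_le_iff₀ (by positivity)] at enlarge
  rw [← mean_value]
  exact (drop_gap₂.trans enlarge).trans (by gcongr)

theorem dist_vertex_le {c : ℝ} {x₁ x₂ y₁ y₂ : E} (hε : 0 < ε) (hc : 0 ≤ c)
    (hu : LocallyIntegrable u μ) (h₁ : ∀ p ∈ ball x₁ ε, 0 ≤ contactGap u ε x₁ y₁ p)
    (h₂ : ∀ p ∈ ball x₂ ε, 0 ≤ contactGap u ε x₂ y₂ p)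
    (hc₁ : ⨍ p in ball x₁ ε, contactGap u ε x₁ y₁ p ∂μ ≤ c * ε ^ 2)
    (hc₂ : ⨍ p in ball x₂ ε, contactGap u ε x₂ y₂ p ∂μ ≤ c * ε ^ 2)
    (hx : dist x₁ x₂ ≤ ε / 2) : dist y₁ y₂ ≤ 2 * 4 ^ finrank ℝ E * c * ε := by
  rcases eq_or_ne y₁ y₂ with rfl | hy
  · rw [dist_self]; positivity
  have hv : 0 < ‖y₁ - y₂‖ := norm_pos_iff.2 (sub_ne_zero.2 hy)
  set k : E := (ε / 4 / ‖y₁ - y₂‖) • (y₁ - y₂) with hk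
  have norm_k : ‖k‖ = ε / 4 := by
    rw [hk, norm_smul, Real.norm_of_nonneg (by positivity), div_mul_cancel₀ _ hv.ne']
  have subset₁ (z : E) (hz : ‖z - x₁‖ = ε / 4) : ball z (ε / 4) ⊆ ball x₁ ε :=
    ball_subset_ball' (by rw [dist_eq_norm]; linarith)
  have subset₂ (z : E) (hz : ‖z - x₁‖ = ε / 4) : ball z (ε / 4) ⊆ ball x₂ ε :=
    ball_subset_ball' (by linarith [dist_triangle z x₁ x₂, dist_eq_norm z x₁])
  have norm_sub : ‖x₁ - k - x₁‖ = ε / 4 := by rw [sub_sub_cancel_left, norm_neg, norm_k]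
  have norm_add : ‖x₁ + k - x₁‖ = ε / 4 := by rw [add_sub_cancel_left, norm_k]
  have below := contactGap_sub_contactGap_le hε hu (subset₁ _ norm_sub) (subset₂ _ norm_sub)
    h₁ h₂ hc₁
  have above := contactGap_sub_contactGap_le hε hu (subset₂ _ norm_add) (subset₁ _ norm_add)
    h₂ h₁ hc₂
  have slope : (‖x₁ - k - y₁‖ ^ 2 - ‖x₁ - k - y₂‖ ^ 2) + (‖x₁ + k - y₂‖ ^ 2 - ‖x₁ + k - y₁‖ ^ 2)
      = 4 * inner ℝ k (y₁ - y₂) := by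
    simp only [sub_right_comm x₁ k, add_sub_right_comm x₁ k, norm_sub_sq_real, norm_add_sq_real,
      inner_sub_left, inner_sub_right, real_inner_comm]
    ring
  have inner_k : inner ℝ k (y₁ - y₂) = ε / 4 * ‖y₁ - y₂‖ := by
    rw [hk, real_inner_smul_left, real_inner_self_eq_norm_sq]
    field_simp
  rw [inner_k] at slope
  simp only [contactGap] at below above
  rw [dist_eq_norm]
  refine le_of_mul_le_mul_left ?_ hε
  linarith

theorem measure_ball_le_of_contactGap_nonneg {Λ c : ℝ} {x y : E} (hΛ : 1 ≤ Λ) (hε : 0 < ε)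
    (hu : LocallyIntegrable u μ) (hxy : ∀ p ∈ ball x (Λ * ε), 0 ≤ contactGap u ε x y p)
    (hc : ⨍ p in ball x ε, contactGap u ε x y p ∂μ ≤ c) (hcd : 10 ^ finrank ℝ E * c ≤ 1 / 4)
    (hx : u x + ‖x - y‖ ^ 2 ≤ 1 / 2) :
    μ (ball x (ε / 10)) ≤ 2 * μ ({p | u p < 1} ∩ ball x (ε / 10)) := by
  have lint := locallyIntegrable_contactGap hu ε x y
  have subset : ball x ε ⊆ ball x (Λ * ε) := ball_subset_ball (le_mul_of_one_le_left hε.le hΛ)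
  have subset' : ball x (ε / 10) ⊆ ball x ε := ball_subset_ball (by linarith)
  have average_le := pow_mul_setAverage_le_of_ball_subset hε (by positivity)
    (integrableOn_ball_of_locallyIntegrable lint x ε) (fun p hp => hxy p (subset hp)) subset'
  rw [div_right_comm, div_self hε.ne', one_div, inv_pow, inv_mul_le_iff₀ (by positivity)]
    at average_le
  have small : ⨍ p in ball x (ε / 10), contactGap u ε x y p ∂μ ≤ 1 / 2 / 2 := by
    linarith [mul_le_mul_of_nonneg_left hc (by positivity : (0 : ℝ) ≤ 10 ^ finrank ℝ E)]
  have sublevel_subset : {p | contactGap u ε x y p < 1 / 2} ⊆ {p | u p < 1} := by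
    intro p (gap_lt : contactGap u ε x y p < 1 / 2)
    simp only [contactGap] at gap_lt
    change u p < 1
    linarith [sq_nonneg ‖p - y‖, sq_nonneg ε]
  exact (measure_le_two_mul_of_setAverage_le
    (integrableOn_ball_of_locallyIntegrable lint x _) measurableSet_ball measure_ball_lt_top.ne
    (fun p hp => hxy p (subset (subset' hp))) one_half_pos small).trans
    (mul_le_mul_right (measure_mono (inter_subset_inter_left _ sublevel_subset)) _)

/-- The factor by which the measure of a set of vertices may exceed the measure of the set where
the touched function is less than `1`. -/
def slidingConst (d : ℕ) (Λ β : ℝ) : ℝ :=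
  2 * (20 * 4 ^ d * ((Λ ^ 2 + 2) / β)) ^ d

theorem measureReal_ball_le_slidingConst_mul {Λ β : ℝ} (hΛ : 1 ≤ Λ) (hβ : 0 < β) (hε : 0 < ε)
    (hΛε : Λ * ε ≤ 1 / 8) (hε' : 10 ^ finrank ℝ E * ((Λ ^ 2 + 2) / β * ε ^ 2) ≤ 1 / 4)
    (hu : LocallyIntegrable u μ) (hum : Measurable u) (hu₀ : ∀ x ∈ ball (0 : E) 1, 0 ≤ u x)
    (h : ∀ x ∈ ball (0 : E) 1, IsSupersolutionAt μ Λ β ε (ε ^ 2) u x)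
    {x₁ : E} (hx₁ : x₁ ∈ ball (0 : E) (1 / 4)) (hux₁ : u x₁ < 1 / 16) :
    μ.real (ball (0 : E) (1 / 4)) ≤
      slidingConst (finrank ℝ E) Λ β * μ.real ({x | u x < 1} ∩ ball 0 1) := by
  choose! X X_mem X_low X_contact using fun y (hy : y ∈ ball (0 : E) (1 / 4)) =>
    exists_contactGap_nonneg hε hΛ hΛε hu₀ hx₁ hux₁ hy
  have average_le (y : E) (hy : y ∈ ball (0 : E) (1 / 4)) :=
    setAverage_contactGap_le hΛ hβ hε hu (h _ (ball_subset_ball (by norm_num) (X_mem y hy)))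
      (X_contact y hy)
  have contact (y : E) (hy : y ∈ ball (0 : E) (1 / 4)) :
      ∀ p ∈ ball (X y) ε, 0 ≤ contactGap u ε (X y) y p := fun p hp =>
    X_contact y hy p (ball_subset_ball (le_mul_of_one_le_left hε.le hΛ) hp)
  have expansion (y : E) (hy : y ∈ ball (0 : E) (1 / 4)) (y' : E) (hy' : y' ∈ ball (0 : E) (1 / 4))
      (hX : dist (X y) (X y') ≤ 5 * (ε / 10)) :
      dist y y' ≤ 20 * 4 ^ finrank ℝ E * ((Λ ^ 2 + 2) / β) * (ε / 10) :=
    (dist_vertex_le hε (by positivity) hu (contact y hy) (contact y' hy') (average_le y hy)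
      (average_le y' hy') (hX.trans_eq (by ring))).trans_eq (by ring)
  have sublevel_subset : {x | u x < 1} ∩ ⋃ y ∈ ball (0 : E) (1 / 4), ball (X y) (ε / 10)
      ⊆ {x | u x < 1} ∩ ball 0 1 := by
    gcongr
    refine iUnion₂_subset fun y hy => ball_subset_ball' ?_
    linarith [X_mem y hy, mem_ball.1 (X_mem y hy), le_mul_of_one_le_left hε.le hΛ]
  have measure_le := (measure_le_mul_measure_inter_biUnion_ball (by positivity) (by positivity)
    (measurableSet_lt hum measurable_const) (fun y hy => measure_ball_le_of_contactGap_nonneg hΛ hε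
      hu (X_contact y hy) (average_le y hy) hε' (X_low y hy)) expansion).trans
    (mul_le_mul_right (mul_le_mul_right (measure_mono (μ := μ) sublevel_subset) _) _)
  have real_le := ENNReal.toReal_mono (ENNReal.mul_ne_top ENNReal.ofReal_ne_top
    (ENNReal.mul_ne_top ENNReal.ofNat_ne_top (measure_ne_top_of_subset inter_subset_right
      measure_ball_lt_top.ne))) measure_le
  rw [ENNReal.toReal_mul, ENNReal.toReal_mul, ENNReal.toReal_ofReal (by positivity)] at real_le
  exact real_le.trans_eq (by simp only [slidingConst, measureReal_def, ENNReal.toReal_ofNat]; ring)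

end SlidingParaboloids

section GaussianBarrier

theorem one_add_sq_div_two_le_cosh (y : ℝ) : 1 + y ^ 2 / 2 ≤ Real.cosh y := by
  have half_le_sinh : (y / 2) ^ 2 ≤ Real.sinh (y / 2) ^ 2 := by
    rw [sq_le_sq, Real.abs_sinh]
    exact Real.self_le_sinh_iff.2 (abs_nonneg _)
  have double_angle := Real.cosh_two_mul (y / 2)
  rw [mul_div_cancel₀ _ two_ne_zero, Real.cosh_sq] at double_angle
  linarith

variable {E : Type*} [NormedAddCommGroup E] {u : E → ℝ} {A : ℝ} {x : E}

/-- A radially decreasing barrier: it is less than `1`, vanishes on the sphere of radius `2`, and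
away from the origin it is a strict subsolution when `A` is large. -/
def gaussianBarrier (A : ℝ) (x : E) : ℝ :=
  Real.exp (-(A * ‖x‖ ^ 2)) - Real.exp (-(4 * A))

/-- The size, relative to `ε²`, of the error terms that the strictness of the barrier absorbs in
the ball of radius `2`. -/
def barrierTolerance (A : ℝ) : ℝ :=
  A * Real.exp (-(4 * A)) / 4

theorem gaussianBarrier_le_one (hA : 0 ≤ A) (x : E) : gaussianBarrier A x ≤ 1 :=
  (sub_le_self _ (Real.exp_pos _).le).trans (Real.exp_le_one_iff.2 (by
    rw [neg_nonpos]; positivity))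

theorem gaussianBarrier_nonpos (hA : 0 ≤ A) (hx : 2 ≤ ‖x‖) : gaussianBarrier A x ≤ 0 := by
  have : 2 ^ 2 ≤ ‖x‖ ^ 2 := by gcongr
  rw [gaussianBarrier, sub_nonpos, Real.exp_le_exp]
  nlinarith

theorem gaussianBarrier_sub_barrierTolerance_ge (hA : 1 ≤ A) (hx : ‖x‖ ≤ 1) :
    Real.exp (-A) / 2 ≤ gaussianBarrier A x - barrierTolerance A := by
  have center : Real.exp (-A) ≤ Real.exp (-(A * ‖x‖ ^ 2)) := by
    rw [Real.exp_le_exp, neg_le_neg_iff]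
    exact mul_le_of_le_one_right (by linarith) (pow_le_one₀ (norm_nonneg x) hx)
  have boundary : Real.exp (-(4 * A)) * (1 + A / 4) ≤ Real.exp (-A) / 2 := by
    have split : Real.exp (-A) = Real.exp (-(4 * A)) * Real.exp (3 * A) := by
      rw [← Real.exp_add]; ring_nf
    rw [split, mul_div_assoc]
    gcongr
    linarith [Real.add_one_le_exp (3 * A)]
  simp only [gaussianBarrier, barrierTolerance]
  linarith

variable [InnerProductSpace ℝ E]

theorem gaussianBarrier_midpoint_ge {h : E} (hAh : A * ‖h‖ ^ 2 ≤ 1 / 2) :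
    Real.exp (-(A * ‖x‖ ^ 2)) * (A ^ 2 * inner ℝ x h ^ 2 - A * ‖h‖ ^ 2) ≤
      (gaussianBarrier A (x + h) + gaussianBarrier A (x - h)) / 2 - gaussianBarrier A x := by
  set a := Real.exp (-(A * ‖x‖ ^ 2)) with ha
  have midpoint_eq : (Real.exp (-(A * ‖x + h‖ ^ 2)) + Real.exp (-(A * ‖x - h‖ ^ 2))) / 2
      = a * (Real.exp (-(A * ‖h‖ ^ 2)) * Real.cosh (2 * A * inner ℝ x h)) := by
    have expand (t : ℝ) : Real.exp (-(A * (‖x‖ ^ 2 + t + ‖h‖ ^ 2)))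
        = a * (Real.exp (-(A * ‖h‖ ^ 2)) * Real.exp (-(A * t))) := by
      rw [ha, ← Real.exp_add, ← Real.exp_add]
      ring_nf
    rw [norm_add_sq_real, norm_sub_sq_real, sub_eq_add_neg (‖x‖ ^ 2), expand, expand, Real.cosh_eq]
    ring_nf
  have product_ge : 1 + (A ^ 2 * inner ℝ x h ^ 2 - A * ‖h‖ ^ 2)
      ≤ Real.exp (-(A * ‖h‖ ^ 2)) * Real.cosh (2 * A * inner ℝ x h) :=
    calc _ ≤ (1 - A * ‖h‖ ^ 2) * (1 + (2 * A * inner ℝ x h) ^ 2 / 2) := by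
          nlinarith [sq_nonneg (A * inner ℝ x h)]
      _ ≤ _ := by
          gcongr
          · exact Real.one_sub_le_exp_neg _
          · exact one_add_sq_div_two_le_cosh _
  simp only [gaussianBarrier]
  have := mul_le_mul_of_nonneg_left product_ge (Real.exp_pos (-(A * ‖x‖ ^ 2))).le
  rw [← ha] at this
  linarith

variable [FiniteDimensional ℝ E] [MeasurableSpace E] [BorelSpace E] {μ : Measure E}
  [μ.IsAddHaarMeasure] {Λ β ε ρ η θ₀ : ℝ}

theorem norm_sq_mul_sq_div_le_setAverage_inner_sq (v : E) (hε : 0 < ε) (x : E) :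
    ‖v‖ ^ 2 * ε ^ 2 / (16 * 4 ^ finrank ℝ E) ≤ ⨍ q in ball x ε, inner ℝ v (q - x) ^ 2 ∂μ := by
  have continuous_sq : Continuous fun q => inner ℝ v (q - x) ^ 2 := by fun_prop
  set z : E := x + (ε / 2 / ‖v‖) • v with hz
  have dist_z : dist z x ≤ ε / 2 := by
    rw [dist_eq_norm, hz, add_sub_cancel_left, norm_smul, norm_div, norm_norm,
      Real.norm_of_nonneg (by positivity), div_mul_eq_mul_div, mul_div_assoc]
    exact mul_le_of_le_one_right (by positivity) (div_self_le_one _)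
  have inner_z : inner ℝ v (z - x) = ε / 2 * ‖v‖ := by
    rw [hz, add_sub_cancel_left, real_inner_smul_right, real_inner_self_eq_norm_sq]
    rcases eq_or_ne ‖v‖ 0 with hv | hv
    · simp [hv]
    · field_simp
  have lower_bound : ∀ q ∈ ball z (ε / 4), (‖v‖ * (ε / 4)) ^ 2 ≤ inner ℝ v (q - x) ^ 2 := by
    intro q hq
    have deviation : |inner ℝ v (q - z)| ≤ ‖v‖ * (ε / 4) :=
      (abs_real_inner_le_norm v (q - z)).trans (by gcongr; exact (mem_ball_iff_norm.1 hq).le)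
    have split : inner ℝ v (q - x) = inner ℝ v (q - z) + inner ℝ v (z - x) := by
      rw [← inner_add_right, sub_add_sub_cancel]
    gcongr
    rw [split, inner_z]
    linarith [neg_le_of_abs_le deviation]
  have quarter_pos : 0 < ε / 4 := by positivity
  have sub_average := pow_mul_setAverage_le_of_ball_subset hε quarter_pos
    (integrableOn_ball_of_locallyIntegrable (μ := μ) continuous_sq.locallyIntegrable x ε)
    (fun q _ => sq_nonneg _) (ball_subset_ball' (x := z) (ε₁ := ε / 4) (by linarith))
  have average_ge := setAverage_mono_on (integrableOn_const (μ := μ) measure_ball_lt_top.ne)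
    (integrableOn_ball_of_locallyIntegrable continuous_sq.locallyIntegrable z (ε / 4))
    measurableSet_ball lower_bound
  rw [setAverage_const (measure_ball_pos μ z quarter_pos).ne' measure_ball_lt_top.ne] at average_ge
  refine le_trans ?_ ((mul_le_mul_of_nonneg_left average_ge (by positivity)).trans sub_average)
  rw [div_right_comm, div_self hε.ne', one_div, inv_pow]
  exact le_of_eq (by ring)

theorem mul_exp_mul_sq_le_of_near_min (hΛ : 1 ≤ Λ) (hβ : 0 < β) (hε : 0 < ε) (hA : 0 ≤ A)
    (hθ₀ : 0 ≤ θ₀) (hAε : A * (Λ * ε) ^ 2 ≤ 1 / 2)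
    (hAβ : 256 * 4 ^ finrank ℝ E * (Λ ^ 2 + 1) ≤ β * A) (hu : LocallyIntegrable u μ)
    (h : IsSupersolutionAt μ Λ β ε ρ u x) (hx : 1 / 4 ≤ ‖x‖)
    (hmin : ∀ p ∈ ball x (Λ * ε),
      u x - θ₀ * gaussianBarrier A x ≤ u p - θ₀ * gaussianBarrier A p + η) :
    θ₀ * A * Real.exp (-(A * ‖x‖ ^ 2)) * ε ^ 2 ≤ ρ + η := by
  set P := θ₀ * A * Real.exp (-(A * ‖x‖ ^ 2)) with hP
  have hP₀ : 0 ≤ P := by positivity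
  have continuous_bump : Continuous fun q => P * A * inner ℝ x (q - x) ^ 2 := by fun_prop
  have average_le := h.mul_setAverage_le (b := P * (Λ * ε) ^ 2 + η) hΛ hβ.le hε hu
    continuous_bump.locallyIntegrable (fun q _ => by positivity) fun k hk => by
      have norm_k : ‖k‖ ^ 2 ≤ (Λ * ε) ^ 2 := by gcongr; exact (mem_ball_zero_iff.1 hk).le
      have barrier_mid := mul_le_mul_of_nonneg_left (gaussianBarrier_midpoint_ge (x := x)
        ((mul_le_mul_of_nonneg_left norm_k hA).trans hAε)) hθ₀
      have add_mem := hmin (x + k) (by simpa [mem_ball_iff_norm] using hk)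
      have sub_mem := hmin (x - k) (by simpa [mem_ball_iff_norm] using hk)
      have := mul_le_mul_of_nonneg_left norm_k hP₀
      rw [add_sub_cancel_left, sub_sub_cancel_left, inner_neg_right, neg_sq, add_self_div_two]
      rw [hP] at this ⊢
      linarith
  have average_ge : P * A * (‖x‖ ^ 2 * ε ^ 2 / (16 * 4 ^ finrank ℝ E))
      ≤ ⨍ q in ball x ε, P * A * inner ℝ x (q - x) ^ 2 ∂μ := by
    have := norm_sq_mul_sq_div_le_setAverage_inner_sq (μ := μ) x hε x
    simp only [setAverage_eq, smul_eq_mul, integral_const_mul] at this ⊢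
    rw [mul_left_comm]
    gcongr
  have coefficient : Λ ^ 2 + 1 ≤ β * A * (‖x‖ ^ 2 / (16 * 4 ^ finrank ℝ E)) :=
    calc Λ ^ 2 + 1
        = 256 * 4 ^ finrank ℝ E * (Λ ^ 2 + 1) * ((1 / 4) ^ 2 / (16 * 4 ^ finrank ℝ E)) := by
          field_simp; norm_num
      _ ≤ _ := by gcongr
  have lower := mul_le_mul_of_nonneg_left coefficient (mul_nonneg hP₀ (sq_nonneg ε))
  have upper := (mul_le_mul_of_nonneg_left average_ge hβ.le).trans average_le
  have regroup : β * (P * A * (‖x‖ ^ 2 * ε ^ 2 / (16 * 4 ^ finrank ℝ E)))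
      = P * ε ^ 2 * (β * A * (‖x‖ ^ 2 / (16 * 4 ^ finrank ℝ E))) := by ring
  linarith

theorem gaussianBarrier_sub_le_of_le_on_ball (hΛ : 1 ≤ Λ) (hβ : 0 < β) (hε : 0 < ε)
    (hΛε : Λ * ε ≤ 1) (hA : 0 < A) (hθ₀ : 0 < θ₀) (hAε : A * (Λ * ε) ^ 2 ≤ 1 / 2)
    (hAβ : 256 * 4 ^ finrank ℝ E * (Λ ^ 2 + 1) ≤ β * A) (hu : LocallyIntegrable u μ)
    (hu₀ : ∀ x ∈ ball (0 : E) 3, 0 ≤ u x) (huθ : ∀ x ∈ ball (0 : E) (1 / 4), θ₀ ≤ u x)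
    (h : ∀ x ∈ ball (0 : E) 2,
      IsSupersolutionAt μ Λ β ε (ε ^ 2 * (θ₀ * barrierTolerance A)) u x)
    {x : E} (hx : x ∈ ball (0 : E) 3) :
    θ₀ * gaussianBarrier A x - ε ^ 2 * (θ₀ * barrierTolerance A) ≤ u x := by
  set η := ε ^ 2 * (θ₀ * barrierTolerance A) with hη
  have η_pos : 0 < η := by rw [hη, barrierTolerance]; positivity
  have barrier_le (p : E) : θ₀ * gaussianBarrier A p ≤ θ₀ :=
    mul_le_of_le_one_right hθ₀.le (gaussianBarrier_le_one hA.le p)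
  by_contra! hux
  obtain ⟨z, hz, near_min⟩ := exists_mem_forall_le_add (A := ball (0 : E) 3)
    (w := fun p => u p - θ₀ * gaussianBarrier A p) ⟨0, mem_ball_self (by norm_num)⟩
    ⟨-θ₀, forall_mem_image.2 fun p hp => by linarith [hu₀ p hp, barrier_le p]⟩ η_pos
  have below_barrier : u z < θ₀ * gaussianBarrier A z := by linarith [near_min x hx]
  have outside : 1 / 4 ≤ ‖z‖ := by
    by_contra! hlt
    linarith [huθ z (mem_ball_zero_iff.2 hlt), barrier_le z]
  have inside : ‖z‖ < 2 := by
    by_contra! hge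
    linarith [hu₀ z hz, mul_nonpos_of_nonneg_of_nonpos hθ₀.le (gaussianBarrier_nonpos hA.le hge)]
  have strict := mul_exp_mul_sq_le_of_near_min hΛ hβ hε hA.le hθ₀.le hAε hAβ hu
    (h z (mem_ball_zero_iff.2 inside)) outside fun p hp =>
      near_min p (ball_subset_ball' (by rw [dist_zero_right]; linarith) hp)
  have exp_le : Real.exp (-(4 * A)) ≤ Real.exp (-(A * ‖z‖ ^ 2)) := by
    rw [Real.exp_le_exp, neg_le_neg_iff, mul_comm]
    have : ‖z‖ ^ 2 ≤ 2 ^ 2 := by gcongr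
    gcongr; linarith
  have four_tolerances : θ₀ * A * ε ^ 2 * Real.exp (-(4 * A)) = 4 * η := by
    rw [hη, barrierTolerance]; ring
  linarith [mul_le_mul_of_nonneg_left exp_le (by positivity : 0 ≤ θ₀ * A * ε ^ 2)]

theorem mul_exp_div_two_le_of_le_on_ball (hΛ : 1 ≤ Λ) (hβ : 0 < β) (hε : 0 < ε)
    (hΛε : Λ * ε ≤ 1) (hA : 1 ≤ A) (hθ₀ : 0 < θ₀) (hAε : A * (Λ * ε) ^ 2 ≤ 1 / 2)
    (hAβ : 256 * 4 ^ finrank ℝ E * (Λ ^ 2 + 1) ≤ β * A) (hu : LocallyIntegrable u μ)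
    (hu₀ : ∀ x ∈ ball (0 : E) 3, 0 ≤ u x) (huθ : ∀ x ∈ ball (0 : E) (1 / 4), θ₀ ≤ u x)
    (h : ∀ x ∈ ball (0 : E) 2,
      IsSupersolutionAt μ Λ β ε (ε ^ 2 * (θ₀ * barrierTolerance A)) u x)
    {x : E} (hx : x ∈ ball (0 : E) 1) : θ₀ * (Real.exp (-A) / 2) ≤ u x := by
  have hA₀ : 0 < A := by linarith
  have comparison := gaussianBarrier_sub_le_of_le_on_ball hΛ hβ hε hΛε hA₀ hθ₀ hAε hAβ hu hu₀ huθ h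
    (ball_subset_ball (by norm_num) hx)
  have ε_sq_le : ε ^ 2 ≤ 1 := pow_le_one₀ hε.le ((le_mul_of_one_le_left hε.le hΛ).trans hΛε)
  have tolerance_nonneg : 0 ≤ θ₀ * barrierTolerance A := by rw [barrierTolerance]; positivity
  linarith [mul_le_mul_of_nonneg_right ε_sq_le tolerance_nonneg, mul_le_mul_of_nonneg_left
    (gaussianBarrier_sub_barrierTolerance_ge hA (mem_ball_zero_iff.1 hx).le) hθ₀.le]

end GaussianBarrier

section MeasureToPoint

variable {E : Type*} [NormedAddCommGroup E] [NormedSpace ℝ E]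

theorem add_smul_mem_ball_iff {x p : E} {r s : ℝ} (hr : 0 < r) :
    x + r • p ∈ ball x (r * s) ↔ p ∈ ball 0 s := by
  rw [mem_ball_iff_norm, add_sub_cancel_left, norm_smul, Real.norm_of_nonneg hr.le,
    mul_lt_mul_iff_right₀ hr, mem_ball_zero_iff]

theorem exists_add_smul_eq_of_mem_ball {x y : E} {r s : ℝ} (hr : 0 < r)
    (hy : y ∈ ball x (r * s)) : ∃ p ∈ ball (0 : E) s, x + r • p = y := by
  have eq : x + r • r⁻¹ • (y - x) = y := by rw [smul_inv_smul₀ hr.ne', add_sub_cancel]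
  exact ⟨r⁻¹ • (y - x), (add_smul_mem_ball_iff hr).1 (eq ▸ hy), eq⟩

variable [MeasurableSpace E]

/-- The conclusion of a measure-to-point estimate: a nonnegative supersolution whose sublevel set
`{u < t}` occupies at most the fraction `ν` of a ball of radius at least `ε / ε₁` is at least
`θ * t` on that ball, provided the right-hand side is at most `κ * t` on the scale of the ball. -/
def MeasureToPoint (μ : Measure E) (Λ β ε₁ κ ν θ : ℝ) : Prop :=
  ∀ ⦃ε r t ρ : ℝ⦄ ⦃x₀ : E⦄ ⦃u : E → ℝ⦄, 0 < ε → 0 < r → 0 < t → ε ≤ ε₁ * r → Measurable u →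
    LocallyIntegrable u μ → (∀ x ∈ ball x₀ (r * 3), 0 ≤ u x) →
    (∀ x ∈ ball x₀ (r * 2), IsSupersolutionAt μ Λ β ε ρ u x) → ρ * r ^ 2 ≤ ε ^ 2 * (κ * t) →
    μ.real ({x | u x < t} ∩ ball x₀ r) ≤ ν * μ.real (ball x₀ r) → ∀ x ∈ ball x₀ r, θ * t ≤ u x

variable [FiniteDimensional ℝ E] [BorelSpace E] (μ : Measure E) [μ.IsAddHaarMeasure]

theorem measureReal_preimage_add_smul (x : E) {r : ℝ} (hr : 0 < r) (s : Set E) :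
    μ.real ((fun p => x + r • p) ⁻¹' s) = (r ^ finrank ℝ E)⁻¹ * μ.real s := by
  rw [measureReal_def, ← preimage_preimage (g := (x + ·)) (f := (r • · : E → E)),
    Measure.addHaar_preimage_smul μ hr.ne', measure_preimage_add, ENNReal.toReal_mul,
    ENNReal.toReal_ofReal (abs_nonneg _), abs_of_pos (by positivity), measureReal_def]

variable {μ} in
theorem locallyIntegrable_rescale {u : E → ℝ} (hu : LocallyIntegrable u μ) (x : E) {r : ℝ}
    (hr : r ≠ 0) (a w : ℝ) : LocallyIntegrable (fun q => (u (x + r • q) - a) / w) μ := by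
  simpa only [div_eq_inv_mul, smul_eq_mul] using!
    ((locallyIntegrable_comp_add_smul hu x hr).sub (locallyIntegrable_const a)).smul w⁻¹

end MeasureToPoint

theorem exists_small_scale (d : ℕ) (Λ β A : ℝ) :
    ∃ ε₁ : ℝ, 0 < ε₁ ∧ Λ * ε₁ ≤ 1 / 8 ∧ 10 ^ d * ((Λ ^ 2 + 2) / β * ε₁ ^ 2) ≤ 1 / 4 ∧
      A * (Λ * ε₁) ^ 2 ≤ 1 / 2 := by
  have eventually_le {φ : ℝ → ℝ} {b : ℝ} (hφ : Continuous φ) (hφ₀ : φ 0 = 0) (hb : 0 < b) :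
      ∀ᶠ e in nhdsWithin 0 (Ioi 0), φ e ≤ b :=
    (((hφ.tendsto' 0 0 hφ₀).eventually_le_const hb)).filter_mono nhdsWithin_le_nhds
  obtain ⟨ε₁, hε₁, h⟩ := (eventually_mem_nhdsWithin.and <|
    (eventually_le (φ := fun e => Λ * e) (b := 1 / 8) (by fun_prop) (by simp) (by norm_num)).and <|
    (eventually_le (φ := fun e => 10 ^ d * ((Λ ^ 2 + 2) / β * e ^ 2)) (b := 1 / 4) (by fun_prop)
      (by simp) (by norm_num)).and <|
    eventually_le (φ := fun e => A * (Λ * e) ^ 2) (b := 1 / 2) (by fun_prop) (by simp)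
      (by norm_num)).exists
  exact ⟨ε₁, hε₁, h⟩

section MeasureToPoint

variable {E : Type*} [NormedAddCommGroup E] [InnerProductSpace ℝ E] [FiniteDimensional ℝ E]
  [MeasurableSpace E] [BorelSpace E] (μ : Measure E) [μ.IsAddHaarMeasure] {Λ β : ℝ}

variable {μ} in
theorem le_on_ball_of_measureReal_sublevel_le {ε ν : ℝ} {u : E → ℝ} (hΛ : 1 ≤ Λ) (hβ : 0 < β)
    (hε : 0 < ε) (hΛε : Λ * ε ≤ 1 / 8)
    (hε' : 10 ^ finrank ℝ E * ((Λ ^ 2 + 2) / β * ε ^ 2) ≤ 1 / 4)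
    (hν : slidingConst (finrank ℝ E) Λ β * ν < (1 / 4) ^ finrank ℝ E) (hum : Measurable u)
    (hu : LocallyIntegrable u μ) (hu₀ : ∀ x ∈ ball (0 : E) 1, 0 ≤ u x)
    (h : ∀ x ∈ ball (0 : E) 1, IsSupersolutionAt μ Λ β ε (ε ^ 2) u x)
    (hvol : μ.real ({x | u x < 1} ∩ ball 0 1) ≤ ν * μ.real (ball (0 : E) 1)) :
    ∀ x ∈ ball (0 : E) (1 / 4), 1 / 16 ≤ u x := by
  by_contra! ⟨x₁, hx₁, hux₁⟩
  have const_nonneg : 0 ≤ slidingConst (finrank ℝ E) Λ β := by rw [slidingConst]; positivity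
  have quarter := measureReal_ball_eq_pow_mul (μ := μ) (0 : E) (by norm_num : (0 : ℝ) < 1 / 4)
  have sliding := measureReal_ball_le_slidingConst_mul hΛ hβ hε hΛε hε' hu hum hu₀ h hx₁ hux₁
  linarith [mul_le_mul_of_nonneg_left hvol const_nonneg,
    mul_lt_mul_of_pos_right hν (measureReal_ball_pos (μ := μ) (0 : E) one_pos)]

theorem exists_forall_le_of_measureReal_sublevel_le (hΛ : 1 ≤ Λ) (hβ : 0 < β) :
    ∃ ε₁ κ ν θ : ℝ, 0 < ε₁ ∧ Λ * ε₁ ≤ 1 / 8 ∧ 0 < κ ∧ ν ∈ Ioo (0 : ℝ) 1 ∧ θ ∈ Ioo (0 : ℝ) 1 ∧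
      ∀ ⦃ε : ℝ⦄ ⦃u : E → ℝ⦄, 0 < ε → ε ≤ ε₁ → Measurable u → LocallyIntegrable u μ →
      (∀ x ∈ ball (0 : E) 3, 0 ≤ u x) →
      (∀ x ∈ ball (0 : E) 2, IsSupersolutionAt μ Λ β ε (ε ^ 2 * κ) u x) →
      μ.real ({x | u x < 1} ∩ ball 0 1) ≤ ν * μ.real (ball (0 : E) 1) →
      ∀ x ∈ ball (0 : E) 1, θ ≤ u x := by
  set d := finrank ℝ E
  set A := max 1 (256 * 4 ^ d * (Λ ^ 2 + 1) / β)
  have hA₁ : 1 ≤ A := le_max_left _ _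
  have hAβ : 256 * 4 ^ d * (Λ ^ 2 + 1) ≤ β * A := by
    rw [← div_le_iff₀' hβ]; exact le_max_right _ _
  obtain ⟨ε₁, hε₁, hΛε₁, hsliding, hbarrier⟩ := exists_small_scale d Λ β A
  have tolerance_pos : 0 < 1 / 16 * barrierTolerance A := by rw [barrierTolerance]; positivity
  have const_pos : 0 < slidingConst d Λ β := by rw [slidingConst]; positivity
  set ν := min (1 / 2) ((1 / 4) ^ d / (2 * slidingConst d Λ β))
  have hν' : slidingConst d Λ β * ν < (1 / 4) ^ d := by
    calc slidingConst d Λ β * ν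
        ≤ slidingConst d Λ β * ((1 / 4) ^ d / (2 * slidingConst d Λ β)) := by
          gcongr; exact min_le_right _ _
      _ = (1 / 4) ^ d / 2 := by field_simp
      _ < (1 / 4) ^ d := half_lt_self (by positivity)
  have exp_lt_one : Real.exp (-A) < 1 := Real.exp_lt_one_iff.2 (by linarith)
  refine ⟨ε₁, min 1 (1 / 16 * barrierTolerance A), ν, 1 / 16 * (Real.exp (-A) / 2), hε₁, hΛε₁,
    lt_min one_pos tolerance_pos, ⟨by positivity, (min_le_left _ _).trans_lt one_half_lt_one⟩,
    ⟨by positivity, by linarith⟩, fun ε u hε hε' hum hu hu₀ h hν_le x hx => ?_⟩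
  refine mul_exp_div_two_le_of_le_on_ball hΛ hβ hε ?_ hA₁ (by norm_num) ?_ hAβ hu hu₀ ?_
    (fun y hy => (h y hy).mono (by gcongr; exact min_le_right _ _)) hx
  · linarith [mul_le_mul_of_nonneg_left hε' (by positivity : 0 ≤ Λ)]
  · exact le_trans (by gcongr) hbarrier
  · exact le_on_ball_of_measureReal_sublevel_le hΛ hβ hε (le_trans (by gcongr) hΛε₁)
      (le_trans (by gcongr) hsliding) hν' hum hu
      (fun y hy => hu₀ y (ball_subset_ball (by norm_num) hy))
      (fun y hy => (h y (ball_subset_ball (by norm_num) hy)).mono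
        (mul_le_of_le_one_right (by positivity) (min_le_left _ _))) hν_le

theorem exists_measureToPoint (hΛ : 1 ≤ Λ) (hβ : 0 < β) :
    ∃ ε₁ κ ν θ : ℝ, 0 < ε₁ ∧ Λ * ε₁ ≤ 1 / 8 ∧ 0 < κ ∧ ν ∈ Ioo (0 : ℝ) 1 ∧ θ ∈ Ioo (0 : ℝ) 1 ∧
      MeasureToPoint μ Λ β ε₁ κ ν θ := by
  obtain ⟨ε₁, κ, ν, θ, hε₁, hΛε₁, hκ, hν, hθ, unit⟩ :=
    exists_forall_le_of_measureReal_sublevel_le μ hΛ hβ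
  refine ⟨ε₁, κ, ν, θ, hε₁, hΛε₁, hκ, hν, hθ, fun ε r t ρ x₀ u hε hr ht hεr hum hu hu₀ h hρ hvol
    x hx => ?_⟩
  have sublevel_eq : {q | (u (x₀ + r • q) - 0) / t < 1} ∩ ball 0 1
      = (fun q => x₀ + r • q) ⁻¹' ({x | u x < t} ∩ ball x₀ r) := by
    ext q
    have := add_smul_mem_ball_iff (x := x₀) (p := q) (s := 1) hr
    rw [mul_one] at this
    simp only [mem_inter_iff, mem_preimage, mem_ofPred_eq, this, sub_zero, div_lt_one ht]
  obtain ⟨q, hq, rfl⟩ := exists_add_smul_eq_of_mem_ball hr ((mul_one r).symm ▸ hx)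
  have conclusion := unit (ε := ε / r) (u := fun q => (u (x₀ + r • q) - 0) / t) (by positivity)
    ((div_le_iff₀ hr).2 hεr) (by fun_prop)
    (locallyIntegrable_rescale hu x₀ hr.ne' 0 t)
    (fun p hp => div_nonneg (by linarith [hu₀ _ ((add_smul_mem_ball_iff hr).2 hp)]) ht.le)
    (fun p hp => ((h _ ((add_smul_mem_ball_iff hr).2 hp)).rescale hε hr ht 0 hu).mono <| by
      rw [div_le_iff₀ ht, div_pow, div_mul_eq_mul_div, div_mul_eq_mul_div,
        le_div_iff₀ (by positivity), mul_assoc]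
      exact hρ)
    (by
      rw [sublevel_eq, measureReal_preimage_add_smul μ x₀ hr,
        inv_mul_le_iff₀ (by positivity)]
      rw [measureReal_ball_eq_pow_mul x₀ hr] at hvol
      exact hvol.trans_eq (by ring)) q hq
  rwa [sub_zero, le_div_iff₀ ht] at conclusion

end MeasureToPoint

section Spreading

/-- The factor lost when a lower bound of a supersolution is spread over a distance `ε / 2`. -/
def spreadConst (d : ℕ) (β : ℝ) : ℝ :=
  β / (4 * 4 ^ d)

theorem spreadConst_pos (d : ℕ) {β : ℝ} (hβ : 0 < β) : 0 < spreadConst d β := by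
  rw [spreadConst]; positivity

theorem spreadConst_le (d : ℕ) {β : ℝ} (hβ : β ≤ 1) : spreadConst d β ≤ 1 / 4 := by
  have : (1 : ℝ) ≤ 4 ^ d := one_le_pow₀ (by norm_num)
  rw [spreadConst, div_le_iff₀ (by positivity)]
  linarith

variable {E : Type*} [NormedAddCommGroup E] [NormedSpace ℝ E] [FiniteDimensional ℝ E]
  [MeasurableSpace E] [BorelSpace E] {μ : Measure E} [μ.IsAddHaarMeasure] {Λ β ε ρ : ℝ}
  {u : E → ℝ} {x z : E}

theorem spreadConst_mul_le_of_le_ball {r t : ℝ} (h : IsSupersolutionAt μ Λ β ε ρ u x)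
    (hΛ : 1 ≤ Λ) (hβ : 0 < β) (hε : 0 < ε) (hu : LocallyIntegrable u μ)
    (hu₀ : ∀ y ∈ ball x (Λ * ε), 0 ≤ u y) (ht : 0 ≤ t) (hr : ε / 4 ≤ r)
    (hz : ∀ y ∈ ball z r, t ≤ u y) (hx : dist x z < r + ε / 2)
    (hρ : ρ ≤ spreadConst (finrank ℝ E) β * t) : spreadConst (finrank ℝ E) β * t ≤ u x := by
  obtain ⟨q, hxq, hqz⟩ := exists_dist_le_le (x := x) (z := z) (δ := 3 * ε / 4) (ε := r - ε / 4)
    (by positivity) (by linarith) (by linarith)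
  have average_ge : t ≤ ⨍ y in ball q (ε / 4), u y ∂μ := by
    rw [← setAverage_const (measure_ball_pos μ q (by positivity : 0 < ε / 4)).ne'
      measure_ball_lt_top.ne t]
    exact setAverage_mono_on (integrableOn_const measure_ball_lt_top.ne)
      (integrableOn_ball_of_locallyIntegrable hu q _) measurableSet_ball
      fun y hy => hz y (ball_subset_ball' (by linarith) hy)
  have dpp := h.mul_setAverage_ball_le hΛ hβ.le hε (s := ε / 4) (z := q) (by positivity) hu hu₀
    (ball_subset_ball' (by rw [dist_comm]; linarith))
  rw [div_right_comm, div_self hε.ne', one_div, inv_pow] at dpp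
  have lower := mul_le_mul_of_nonneg_left average_ge
    (by positivity : 0 ≤ β * (4 ^ finrank ℝ E)⁻¹)
  have four_mul : 4 * (spreadConst (finrank ℝ E) β * t) = β * (4 ^ finrank ℝ E)⁻¹ * t := by
    rw [spreadConst]; field_simp
  linarith [mul_nonneg (spreadConst_pos (finrank ℝ E) hβ).le ht]

theorem spreadConst_le_of_half_le_setAverage (h : IsSupersolutionAt μ Λ β ε ρ u x)
    (hΛ : 1 ≤ Λ) (hβ : 0 < β) (hε : 0 < ε) (hu : LocallyIntegrable u μ)
    (hu₀ : ∀ y ∈ ball x (Λ * ε), 0 ≤ u y) (hz : 1 / 2 ≤ ⨍ y in ball z (ε / 2), u y ∂μ)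
    (hx : x ∈ ball z (ε / 2)) (hρ : ρ ≤ spreadConst (finrank ℝ E) β) :
    spreadConst (finrank ℝ E) β ≤ u x := by
  have dpp := h.mul_setAverage_ball_le hΛ hβ.le hε (s := ε / 2) (z := z) (by positivity) hu hu₀
    (ball_subset_ball' (by rw [dist_comm]; linarith [mem_ball.1 hx]))
  rw [div_right_comm, div_self hε.ne', one_div, inv_pow] at dpp
  have lower := mul_le_mul_of_nonneg_left hz (by positivity : 0 ≤ β * (2 ^ finrank ℝ E)⁻¹)
  have two_mul_le : 2 * spreadConst (finrank ℝ E) β ≤ β * (2 ^ finrank ℝ E)⁻¹ * (1 / 2) := by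
    calc 2 * spreadConst (finrank ℝ E) β = β * (4 ^ finrank ℝ E)⁻¹ * (1 / 2) := by
          rw [spreadConst]; field_simp; norm_num
      _ ≤ _ := by gcongr; norm_num
  linarith

theorem spreadConst_pow_le_of_half_le_setAverage (hΛ : 1 ≤ Λ) (hβ : 0 < β) (hβ₁ : β ≤ 1)
    (hε : 0 < ε) (hu : LocallyIntegrable u μ) (hz : 1 / 2 ≤ ⨍ y in ball z (ε / 2), u y ∂μ) (k : ℕ)
    (hu₀ : ∀ y ∈ ball z ((k + 1) * (ε / 2) + Λ * ε), 0 ≤ u y)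
    (h : ∀ x ∈ ball z ((k + 1) * (ε / 2)), IsSupersolutionAt μ Λ β ε ρ u x)
    (hρ : ρ ≤ spreadConst (finrank ℝ E) β ^ (k + 1)) :
    ∀ x ∈ ball z ((k + 1) * (ε / 2)), spreadConst (finrank ℝ E) β ^ (k + 1) ≤ u x := by
  have const_pos := spreadConst_pos (finrank ℝ E) hβ
  have nonneg (x : E) (hx : x ∈ ball z ((k + 1) * (ε / 2))) (y : E) (hy : y ∈ ball x (Λ * ε)) :
      0 ≤ u y := hu₀ y (ball_subset_ball' (by linarith [mem_ball.1 hx]) hy)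
  induction k with
  | zero =>
    intro x hx
    rw [zero_add, pow_one] at hρ ⊢
    exact spreadConst_le_of_half_le_setAverage (h x hx) hΛ hβ hε hu (nonneg x hx) hz
      (by simpa using hx) hρ
  | succ k ih =>
    have radius_le : ((k : ℝ) + 1) * (ε / 2) ≤ ((k + 1 : ℕ) + 1) * (ε / 2) := by
      push_cast; gcongr; linarith
    have previous := ih (fun y hy => hu₀ y (ball_subset_ball (by linarith) hy))
      (fun x hx => h x (ball_subset_ball radius_le hx))
      (hρ.trans (pow_le_pow_of_le_one const_pos.le
        ((spreadConst_le _ hβ₁).trans (by norm_num)) (Nat.le_succ _)))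
      (fun x hx => nonneg x (ball_subset_ball radius_le hx))
    intro x hx
    rw [pow_succ'] at hρ ⊢
    refine spreadConst_mul_le_of_le_ball (h x hx) hΛ hβ hε hu (nonneg x hx) (by positivity)
      (r := (k + 1) * (ε / 2)) ?_ previous ?_ hρ
    · nlinarith [mul_nonneg k.cast_nonneg hε.le]
    · have := mem_ball.1 hx
      push_cast at this
      linarith

end Spreading

section InkSpots

theorem continuousOn_measureReal_inter {X ι : Type*} [MeasurableSpace X] {μ : Measure X}
    [LinearOrder ι] [TopologicalSpace ι] {I : Set ι} {B : ι → Set X} (hB : MonotoneOn B I)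
    (hmeas : ∀ t, MeasurableSet (B t)) (hfin : ∀ t, μ (B t) ≠ ⊤)
    (hcont : ContinuousOn (fun t => μ.real (B t)) I) (G : Set X) :
    ContinuousOn (fun t => μ.real (G ∩ B t)) I := by
  have increment {s t : ι} (hs : s ∈ I) (ht : t ∈ I) (hst : s ≤ t) :
      |μ.real (G ∩ B t) - μ.real (G ∩ B s)| ≤ |μ.real (B t) - μ.real (B s)| := by
    have subset := hB hs ht hst
    have split : G ∩ B t ⊆ G ∩ B s ∪ B t \ B s := fun x hx => by
      by_cases hxs : x ∈ B s
      exacts [.inl ⟨hx.1, hxs⟩, .inr ⟨hx.2, hxs⟩]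
    have increasing := measureReal_mono (μ := μ) (inter_subset_inter_right G subset)
      (measure_ne_top_of_subset inter_subset_right (hfin t))
    have le_add := (measureReal_mono (μ := μ) split (measure_union_ne_top
      (measure_ne_top_of_subset inter_subset_right (hfin s))
      (measure_ne_top_of_subset sdiff_subset (hfin t)))).trans (measureReal_union_le _ _)
    rw [measureReal_sdiff subset (hmeas s) (hfin t)] at le_add
    rw [abs_of_nonneg (by linarith)]
    exact le_trans (by linarith) (le_abs_self _)
  intro s hs
  rw [ContinuousWithinAt, tendsto_iff_dist_tendsto_zero]
  refine squeeze_zero' (.of_forall fun _ => dist_nonneg) ?_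
    (tendsto_iff_dist_tendsto_zero.1 (hcont s hs))
  filter_upwards [self_mem_nhdsWithin] with t ht
  rcases le_total s t with hst | hts
  · exact increment hs ht hst
  · rw [dist_comm, dist_comm (μ.real (B t))]
    exact increment ht hs hts

theorem measure_le_mul_measure_compl_inter {X : Type*} [MeasurableSpace X] {μ : Measure X}
    {G B : Set X} {ν : ℝ} (hν : 0 < ν) (hG : MeasurableSet G) (hB : μ B ≠ ⊤)
    (h : μ.real (G ∩ B) ≤ (1 - ν) * μ.real B) :
    μ B ≤ ENNReal.ofReal ν⁻¹ * μ (Gᶜ ∩ B) := by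
  have split := measureReal_inter_add_sdiff (μ := μ) (s := B) hG hB
  rw [inter_comm, sdiff_eq, inter_comm _ Gᶜ] at split
  rw [← ofReal_measureReal hB, ← ofReal_measureReal
    (measure_ne_top_of_subset inter_subset_right hB), ← ENNReal.ofReal_mul (by positivity)]
  exact ENNReal.ofReal_le_ofReal (by rw [le_inv_mul_iff₀ hν]; linarith)

variable {E : Type*} [NormedAddCommGroup E] {ν r₀ : ℝ} {G : Set E}

theorem monotone_ball_one_sub_smul [NormedSpace ℝ E] {a : E} {r : ℝ} (har : ‖a‖ + r ≤ 1) :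
    Monotone fun t : ℝ => ball ((1 - t) • a) ((1 - t) * r + t) := by
  intro s t hst
  refine ball_subset_ball' ?_
  rw [dist_eq_norm, ← sub_smul, norm_smul, Real.norm_of_nonneg (by linarith)]
  linarith [mul_le_mul_of_nonneg_left har (sub_nonneg.2 hst)]

variable (E) in
/-- The pairs `(center, radius)` of the balls of radius at least `r₀` inside the unit ball. -/
def unitSubballs (r₀ : ℝ) : Set (E × ℝ) :=
  {b | r₀ ≤ b.2 ∧ ‖b.1‖ + b.2 ≤ 1}

/-- `G` is a union of balls of radius at least `r₀` inside the unit ball. -/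
def IsUnionOfSubballs (r₀ : ℝ) (G : Set E) : Prop :=
  ∃ T ⊆ unitSubballs E r₀, G = ⋃ b ∈ T, ball b.1 b.2

namespace IsUnionOfSubballs

theorem subset_ball (h : IsUnionOfSubballs r₀ G) : G ⊆ ball 0 1 := by
  obtain ⟨T, hT, rfl⟩ := h
  refine iUnion₂_subset fun b hb => ball_subset_ball' ?_
  rw [dist_zero_right, add_comm]
  exact (hT hb).2

theorem isOpen (h : IsUnionOfSubballs r₀ G) : IsOpen G := by
  obtain ⟨T, -, rfl⟩ := h
  exact isOpen_biUnion fun _ _ => isOpen_ball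

end IsUnionOfSubballs

variable [MeasurableSpace E] {μ : Measure E}

variable (μ) in
/-- The union of the balls of radius at least `r₀` inside the unit ball in which `G` has density at
least `1 - ν`. -/
def densityHull (ν r₀ : ℝ) (G : Set E) : Set E :=
  ⋃ b ∈ {b ∈ unitSubballs E r₀ | (1 - ν) * μ.real (ball b.1 b.2) ≤ μ.real (G ∩ ball b.1 b.2)},
    ball b.1 b.2

theorem mem_densityHull_iff {x : E} :
    x ∈ densityHull μ ν r₀ G ↔ ∃ c s, r₀ ≤ s ∧ ‖c‖ + s ≤ 1 ∧
      (1 - ν) * μ.real (ball c s) ≤ μ.real (G ∩ ball c s) ∧ x ∈ ball c s := by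
  simp [densityHull, unitSubballs, and_assoc]

theorem isUnionOfSubballs_densityHull (ν r₀ : ℝ) (G : Set E) :
    IsUnionOfSubballs r₀ (densityHull μ ν r₀ G) :=
  ⟨_, sep_subset _ _, rfl⟩

namespace IsUnionOfSubballs

theorem subset_densityHull (h : IsUnionOfSubballs r₀ G) (hν : 0 ≤ ν) :
    G ⊆ densityHull μ ν r₀ G := by
  obtain ⟨T, hT, rfl⟩ := h
  refine biUnion_mono (fun b hb => ⟨hT hb, ?_⟩) fun _ _ => le_rfl
  rw [inter_eq_right.2 (subset_biUnion_of_mem (u := fun b : E × ℝ => ball b.1 b.2) hb)]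
  exact mul_le_of_le_one_left measureReal_nonneg (by linarith)

theorem ball_subset_densityHull (h : IsUnionOfSubballs r₀ G) (hr₀ : r₀ ≤ 1)
    (hG : (1 - ν) * μ.real (ball (0 : E) 1) ≤ μ.real G) : ball 0 1 ⊆ densityHull μ ν r₀ G :=
  fun _ hx => mem_densityHull_iff.2
    ⟨0, 1, hr₀, by simp, by rwa [inter_eq_left.2 h.subset_ball], hx⟩

theorem iterate_densityHull (h : IsUnionOfSubballs r₀ G) (n : ℕ) :
    IsUnionOfSubballs r₀ ((densityHull μ ν r₀)^[n] G) :=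
  Function.Iterate.rec _ h (fun _ _ => isUnionOfSubballs_densityHull ν r₀ _) n

end IsUnionOfSubballs

variable [NormedSpace ℝ E] [FiniteDimensional ℝ E] [BorelSpace E] [μ.IsAddHaarMeasure]

theorem exists_ball_measureReal_inter_eq {a : E} {r : ℝ} (hν : 0 ≤ ν) (hr : 0 < r)
    (har : ‖a‖ + r ≤ 1) (hG : ball a r ⊆ G)
    (hGν : μ.real (G ∩ ball 0 1) ≤ (1 - ν) * μ.real (ball (0 : E) 1)) :
    ∃ (c : E) (s : ℝ), r ≤ s ∧ ‖c‖ + s ≤ 1 ∧ ball a r ⊆ ball c s ∧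
      μ.real (G ∩ ball c s) = (1 - ν) * μ.real (ball c s) := by
  have hr₁ : r ≤ 1 := by linarith [norm_nonneg a]
  have radius_ge {t : ℝ} (ht : t ∈ Icc (0 : ℝ) 1) : r ≤ (1 - t) * r + t := by
    linarith [mul_le_mul_of_nonneg_left hr₁ ht.1]
  have monotone := monotone_ball_one_sub_smul har
  have continuous_ball : ContinuousOn
      (fun t : ℝ => μ.real (ball ((1 - t) • a) ((1 - t) * r + t))) (Icc 0 1) :=
    ContinuousOn.congr (f := fun t : ℝ => ((1 - t) * r + t) ^ finrank ℝ E * μ.real (ball (0 : E) 1))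
      (by fun_prop) fun t ht => measureReal_ball_eq_pow_mul _ (hr.trans_le (radius_ge ht))
  have continuous_inter := continuousOn_measureReal_inter (monotone.monotoneOn _)
    (fun _ => measurableSet_ball) (fun _ => measure_ball_lt_top.ne) continuous_ball G
  obtain ⟨t, ht, density⟩ := intermediate_value_Icc' zero_le_one
    (continuous_inter.sub (continuous_ball.const_mul (1 - ν)))
    (show (0 : ℝ) ∈ Icc _ _ from ⟨by simpa using hGν, by
      simpa [inter_eq_right.2 hG] using
        mul_le_of_le_one_left (measureReal_nonneg (μ := μ)) (sub_le_self 1 hν)⟩)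
  refine ⟨(1 - t) • a, (1 - t) * r + t, radius_ge ht, ?_, by simpa using monotone ht.1,
    sub_eq_zero.1 density⟩
  rw [norm_smul, Real.norm_of_nonneg (by linarith [ht.2])]
  linarith [mul_le_mul_of_nonneg_left har (sub_nonneg.2 ht.2)]

theorem measureReal_le_mul_measureReal_densityHull_sdiff (h : IsUnionOfSubballs r₀ G)
    (hr₀ : 0 < r₀) (hν : 0 < ν) (hGν : μ.real G ≤ (1 - ν) * μ.real (ball (0 : E) 1)) :
    μ.real G ≤ 5 ^ finrank ℝ E / ν * μ.real (densityHull μ ν r₀ G \ G) := by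
  set T := {b ∈ unitSubballs E r₀ | μ.real (G ∩ ball b.1 b.2) = (1 - ν) * μ.real (ball b.1 b.2)}
  obtain ⟨v, hv, countable, cover, tsum_le⟩ := exists_countable_subfamily_cover_tsum_measure_le μ
    (fun b (hb : b ∈ T) => hr₀.trans_le hb.1.1)
    (fun b hb => by linarith [hb.1.2, norm_nonneg b.1] : ∀ b ∈ T, b.2 ≤ 1)
    h.isOpen.measurableSet.compl fun b hb => measure_le_mul_measure_compl_inter hν
      h.isOpen.measurableSet measure_ball_lt_top.ne hb.2.le
  have cover' : G ⊆ ⋃ b ∈ v, closedBall b.1 (5 * b.2) := by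
    obtain ⟨S, hS, rfl⟩ := id h
    refine iUnion₂_subset fun a ha => ?_
    obtain ⟨c, s, hs, hcs, subset, density⟩ := exists_ball_measureReal_inter_eq hν.le
      (hr₀.trans_le (hS ha).1) (hS ha).2
      (subset_biUnion_of_mem (u := fun b : E × ℝ => ball b.1 b.2) ha)
      (by rwa [inter_eq_left.2 h.subset_ball])
    obtain ⟨b, hb, hcb⟩ := cover (c, s) ⟨⟨(hS ha).1.trans hs, hcs⟩, density⟩
    exact (subset.trans (ball_subset_closedBall.trans hcb)).trans
      (subset_biUnion_of_mem (u := fun b : E × ℝ => closedBall b.1 (5 * b.2)) hb)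
  have hull_subset : Gᶜ ∩ ⋃ b ∈ T, ball b.1 b.2 ⊆ densityHull μ ν r₀ G \ G := by
    rw [inter_comm, ← sdiff_eq]
    exact sdiff_subset_sdiff_left (biUnion_subset_biUnion_left fun b hb => ⟨hb.1, hb.2.ge⟩)
  have measure_le : μ G ≤ ENNReal.ofReal (5 ^ finrank ℝ E) * (ENNReal.ofReal ν⁻¹ *
      μ (densityHull μ ν r₀ G \ G)) := by
    calc μ G ≤ ∑' b : v, μ (closedBall b.1.1 (5 * b.1.2)) :=
          (measure_mono cover').trans (measure_biUnion_le μ countable _)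
      _ = ENNReal.ofReal (5 ^ finrank ℝ E) * ∑' b : v, μ (ball b.1.1 b.1.2) := by
          rw [← ENNReal.tsum_mul_left]
          exact tsum_congr fun b => measure_closedBall_mul _ _ (by norm_num)
            (hr₀.trans_le (hv b.2).1.1)
      _ ≤ _ := mul_le_mul_right (tsum_le.trans (mul_le_mul_right (measure_mono hull_subset) _)) _
  have finite : μ (densityHull μ ν r₀ G \ G) ≠ ⊤ := measure_ne_top_of_subset
    (sdiff_subset.trans (isUnionOfSubballs_densityHull ν r₀ G).subset_ball) measure_ball_lt_top.ne
  have real_le := ENNReal.toReal_mono (by finiteness) measure_le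
  rwa [ENNReal.toReal_mul, ENNReal.toReal_mul, ENNReal.toReal_ofReal (by positivity),
    ENNReal.toReal_ofReal (by positivity), ← mul_assoc, ← div_eq_mul_inv] at real_le

theorem mul_measureReal_le_measureReal_densityHull (h : IsUnionOfSubballs r₀ G)
    (hr₀ : 0 < r₀) (hν : 0 < ν) (hGν : μ.real G ≤ (1 - ν) * μ.real (ball (0 : E) 1)) :
    (1 + ν / 5 ^ finrank ℝ E) * μ.real G ≤ μ.real (densityHull μ ν r₀ G) := by
  have le_mul_sdiff := measureReal_le_mul_measureReal_densityHull_sdiff h hr₀ hν hGν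
  rw [measureReal_sdiff (h.subset_densityHull hν.le) h.isOpen.measurableSet
    (measure_ne_top_of_subset (isUnionOfSubballs_densityHull ν r₀ G).subset_ball
      measure_ball_lt_top.ne), ← div_le_iff₀' (by positivity), div_div_eq_mul_div] at le_mul_sdiff
  have expand : (1 + ν / 5 ^ finrank ℝ E) * μ.real G
      = μ.real G + μ.real G * ν / 5 ^ finrank ℝ E := by ring
  linarith

theorem ball_subset_iterate_densityHull (h : IsUnionOfSubballs r₀ G) (hr₀ : 0 < r₀)
    (hr₁ : r₀ ≤ 1) (hν : 0 < ν) {n : ℕ}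
    (hn : μ.real (ball (0 : E) 1) < (1 + ν / 5 ^ finrank ℝ E) ^ n * μ.real G) :
    ball 0 1 ⊆ (densityHull μ ν r₀)^[n] G := by
  have full_or_growth (k : ℕ) : ball 0 1 ⊆ (densityHull μ ν r₀)^[k] G ∨
      (1 + ν / 5 ^ finrank ℝ E) ^ k * μ.real G ≤ μ.real ((densityHull μ ν r₀)^[k] G) := by
    induction k with
    | zero => simp
    | succ k ih =>
      have union := h.iterate_densityHull (μ := μ) (ν := ν) k
      rw [Function.iterate_succ_apply']
      rcases ih with full | growth
      · exact .inl (full.trans (union.subset_densityHull hν.le))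
      rcases le_total ((1 - ν) * μ.real (ball (0 : E) 1))
        (μ.real ((densityHull μ ν r₀)^[k] G)) with dense | sparse
      · exact .inl (union.ball_subset_densityHull hr₁ dense)
      · refine .inr (le_trans ?_ (mul_measureReal_le_measureReal_densityHull union hr₀ hν sparse))
        rw [pow_succ', mul_assoc]
        gcongr
  refine (full_or_growth n).resolve_right fun growth => ?_
  have := measureReal_mono (μ := μ) (h.iterate_densityHull (μ := μ) (ν := ν) n).subset_ball
    measure_ball_lt_top.ne
  linarith

end InkSpots

section OscillationDecay

variable {E : Type*} [NormedAddCommGroup E]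

theorem isUnionOfSubballs_biUnion_ball {A : Set E} {s r₀ : ℝ} (hA : A ⊆ ball 0 s)
    (hr₀ : s + r₀ ≤ 1) : IsUnionOfSubballs r₀ (⋃ x ∈ A, ball x r₀) := by
  refine ⟨(·, r₀) '' A, ?_, by rw [biUnion_image]⟩
  rintro _ ⟨x, hx, rfl⟩
  exact ⟨le_rfl, by linarith [mem_ball_zero_iff.1 (hA hx)]⟩

namespace MeasureToPoint

variable [NormedSpace ℝ E] [FiniteDimensional ℝ E] [MeasurableSpace E] {μ : Measure E}
  [μ.IsAddHaarMeasure] {Λ β ε₁ κ ν θ ε ρ t : ℝ} {u : E → ℝ} {G : Set E}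

theorem mul_le_of_mem_densityHull (H : MeasureToPoint μ Λ β ε₁ κ ν θ) (hε₁ : 0 < ε₁) (hκ : 0 ≤ κ)
    (hε : 0 < ε) (ht : 0 < t) (hum : Measurable u) (hu : LocallyIntegrable u μ)
    (hu₀ : ∀ x ∈ ball (0 : E) 3, 0 ≤ u x)
    (h : ∀ x ∈ ball (0 : E) 3, IsSupersolutionAt μ Λ β ε ρ u x) (hρ : ρ ≤ ε ^ 2 * (κ * t))
    (hG : ∀ x ∈ G, t ≤ u x) : ∀ x ∈ densityHull μ ν (ε / ε₁) G, θ * t ≤ u x := by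
  intro x hx
  obtain ⟨c, s, hs, hcs, density, hxc⟩ := mem_densityHull_iff.1 hx
  have s_pos : 0 < s := (div_pos hε hε₁).trans_le hs
  have s_le : s ≤ 1 := by linarith [norm_nonneg c]
  have subset {q : ℝ} (hq : q ≤ 3) : ball c (s * q) ⊆ ball 0 3 :=
    ball_subset_ball' (by rw [dist_zero_right]; nlinarith)
  refine H hε s_pos ht (by rwa [div_le_iff₀' hε₁] at hs) hum hu
    (fun y hy => hu₀ y (subset le_rfl hy)) (fun y hy => h y (subset (by norm_num) hy)) ?_ ?_ x hxc
  · calc ρ * s ^ 2 ≤ ε ^ 2 * (κ * t) * s ^ 2 := by gcongr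
      _ ≤ ε ^ 2 * (κ * t) := mul_le_of_le_one_right (by positivity) (pow_le_one₀ s_pos.le s_le)
  · have split := measureReal_inter_add_sdiff (μ := μ) (s := ball c s)
      (measurableSet_lt hum (measurable_const (a := t))) measure_ball_lt_top.ne
    have superlevel := measureReal_mono (μ := μ)
      (show G ∩ ball c s ⊆ ball c s \ {y | u y < t} from fun y hy => ⟨hy.2, (hG y hy.1).not_gt⟩)
      (measure_ne_top_of_subset sdiff_subset measure_ball_lt_top.ne)
    rw [inter_comm]
    linarith

theorem pow_mul_le_of_mem_iterate_densityHull (H : MeasureToPoint μ Λ β ε₁ κ ν θ) (hε₁ : 0 < ε₁)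
    (hκ : 0 ≤ κ) (hθ : θ ∈ Ioo 0 1) (hε : 0 < ε) (ht : 0 < t) (hum : Measurable u)
    (hu : LocallyIntegrable u μ) (hu₀ : ∀ x ∈ ball (0 : E) 3, 0 ≤ u x)
    (h : ∀ x ∈ ball (0 : E) 3, IsSupersolutionAt μ Λ β ε ρ u x) (n : ℕ)
    (hρ : ρ ≤ ε ^ 2 * (κ * (θ ^ n * t))) (hG : ∀ x ∈ G, t ≤ u x) :
    ∀ x ∈ (densityHull μ ν (ε / ε₁))^[n] G, θ ^ n * t ≤ u x := by
  have θ_pos := hθ.1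
  induction n with
  | zero => simpa using hG
  | succ n ih =>
    have weaken : ρ ≤ ε ^ 2 * (κ * (θ ^ n * t)) := hρ.trans (by
      gcongr ε ^ 2 * (κ * (?_ * t))
      exact pow_le_pow_of_le_one θ_pos.le hθ.2.le n.le_succ)
    rw [Function.iterate_succ_apply', pow_succ', mul_assoc]
    exact H.mul_le_of_mem_densityHull hε₁ hκ hε (by positivity) hum hu hu₀ h weaken (ih weaken)

variable [BorelSpace E]

theorem le_of_half_measure (H : MeasureToPoint μ Λ β ε₁ κ ν θ) (hΛ : 1 ≤ Λ) (hβ : β ∈ Ioc 0 1)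
    (hε₁ : 0 < ε₁) (hΛε₁ : Λ * ε₁ ≤ 1) (hκ : 0 ≤ κ) (hν : 0 < ν) (hθ : θ ∈ Ioo 0 1) {k n : ℕ}
    (hk : 2 / ε₁ ≤ k + 1) (hn : 2 * 2 ^ finrank ℝ E < (1 + ν / 5 ^ finrank ℝ E) ^ n) (hε : 0 < ε)
    (hεε₁ : ε ≤ ε₁ / 2) (hεk : (k + 1) * ε ≤ 1) (hum : Measurable u) (hu : LocallyIntegrable u μ)
    (hu₀ : ∀ x ∈ ball (0 : E) 3, 0 ≤ u x)
    (h : ∀ x ∈ ball (0 : E) 3, IsSupersolutionAt μ Λ β ε ρ u x)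
    (hρ : ρ ≤ spreadConst (finrank ℝ E) β ^ (k + 1))
    (hρ' : ρ ≤ ε ^ 2 * (κ * (θ ^ n * spreadConst (finrank ℝ E) β ^ (k + 1))))
    (half : μ.real (ball (0 : E) (1 / 2)) ≤
      2 * μ.real {x ∈ ball (0 : E) (1 / 2) | 1 / 2 ≤ ⨍ y in ball x (ε / 2), u y ∂μ}) :
    ∀ x ∈ ball (0 : E) 1, θ ^ n * spreadConst (finrank ℝ E) β ^ (k + 1) ≤ u x := by
  set A := {x ∈ ball (0 : E) (1 / 2) | 1 / 2 ≤ ⨍ y in ball x (ε / 2), u y ∂μ}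
  have radius_pos : 0 < ε / ε₁ := div_pos hε hε₁
  have radius_le : ε / ε₁ ≤ 1 / 2 := by rw [div_le_iff₀ hε₁]; linarith
  have union := isUnionOfSubballs_biUnion_ball (sep_subset _ _ : A ⊆ _)
    (by linarith : 1 / 2 + ε / ε₁ ≤ 1)
  have lower_bound : ∀ x ∈ ⋃ z ∈ A, ball z (ε / ε₁),
      spreadConst (finrank ℝ E) β ^ (k + 1) ≤ u x := by
    intro x hx
    obtain ⟨z, hz, hxz⟩ := mem_iUnion₂.1 hx
    have hz₁ := mem_ball.1 hz.1
    have radius_le_spread : ε / ε₁ ≤ (k + 1) * (ε / 2) := by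
      calc ε / ε₁ = 2 / ε₁ * (ε / 2) := by field_simp
        _ ≤ _ := by gcongr
    have step_le : Λ * ε ≤ 1 := by nlinarith
    exact spreadConst_pow_le_of_half_le_setAverage hΛ hβ.1 hβ.2 hε hu hz.2 k
      (fun y hy => hu₀ y (ball_subset_ball' (by linarith) hy))
      (fun y hy => h y (ball_subset_ball' (by linarith) hy)) hρ x
      (ball_subset_ball radius_le_spread hxz)
  have measure_A_le : μ.real A ≤ μ.real (⋃ z ∈ A, ball z (ε / ε₁)) :=
    measureReal_mono (fun x hx => mem_biUnion hx (mem_ball_self radius_pos))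
      (measure_ne_top_of_subset union.subset_ball measure_ball_lt_top.ne)
  have full := ball_subset_iterate_densityHull (μ := μ) (n := n) union radius_pos (by linarith) hν
    (by
      have half_ball := measureReal_ball_eq_pow_mul (μ := μ) (0 : E) one_half_pos
      have ball_pos := measureReal_ball_pos (μ := μ) (0 : E) one_half_pos
      calc μ.real (ball (0 : E) 1) = 2 * 2 ^ finrank ℝ E * (μ.real (ball (0 : E) (1 / 2)) / 2) := by
            rw [half_ball, one_div, inv_pow]; field_simp
        _ < (1 + ν / 5 ^ finrank ℝ E) ^ n * (μ.real (ball (0 : E) (1 / 2)) / 2) := by gcongr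
        _ ≤ _ := by gcongr; linarith)
  exact fun x hx => H.pow_mul_le_of_mem_iterate_densityHull hε₁ hκ hθ hε
    (pow_pos (spreadConst_pos _ hβ.1) _) hum hu hu₀ h n hρ' lower_bound x (full hx)

end MeasureToPoint

theorem half_measure_or_half_measure_one_sub [NormedSpace ℝ E] [FiniteDimensional ℝ E]
    [MeasurableSpace E] [BorelSpace E] {μ : Measure E} [μ.IsAddHaarMeasure] {ε : ℝ} {u : E → ℝ}
    (hε : 0 < ε) (hu : LocallyIntegrable u μ) (c : E) (r : ℝ) :
    μ.real (ball c r) ≤ 2 * μ.real {x ∈ ball c r | 1 / 2 ≤ ⨍ y in ball x ε, u y ∂μ} ∨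
      μ.real (ball c r) ≤ 2 * μ.real {x ∈ ball c r | 1 / 2 ≤ ⨍ y in ball x ε, (1 - u y) ∂μ} := by
  have average_one_sub (x : E) :
      ⨍ y in ball x ε, (1 - u y) ∂μ = 1 - ⨍ y in ball x ε, u y ∂μ := by
    have ball_pos := measureReal_ball_pos (μ := μ) x hε
    simp only [setAverage_eq, smul_eq_mul]
    rw [integral_sub (f := fun _ => (1 : ℝ)) (integrableOn_const measure_ball_lt_top.ne)
      (integrableOn_ball_of_locallyIntegrable hu x ε), setIntegral_const, smul_eq_mul]
    field_simp
  have cover : ball c r ⊆ {x ∈ ball c r | 1 / 2 ≤ ⨍ y in ball x ε, u y ∂μ} ∪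
      {x ∈ ball c r | 1 / 2 ≤ ⨍ y in ball x ε, (1 - u y) ∂μ} := fun x hx => by
    rcases le_total (1 / 2) (⨍ y in ball x ε, u y ∂μ) with h | h
    · exact .inl ⟨hx, h⟩
    · exact .inr ⟨hx, by rw [average_one_sub]; linarith⟩
  have measure_le := (measureReal_mono (μ := μ) cover (measure_ne_top_of_subset
    (union_subset (sep_subset _ _) (sep_subset _ _)) measure_ball_lt_top.ne)).trans
    (measureReal_union_le _ _)
  by_contra! small
  linarith [small.1, small.2]

variable [InnerProductSpace ℝ E] [FiniteDimensional ℝ E] [MeasurableSpace E] [BorelSpace E]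
  (μ : Measure E) [μ.IsAddHaarMeasure] {Λ β : ℝ}

theorem exists_le_of_half_measure (hΛ : 1 ≤ Λ) (hβ : β ∈ Ioc 0 1) :
    ∃ ε₂ κ θ : ℝ, 0 < ε₂ ∧ 0 < κ ∧ θ ∈ Ioc 0 (1 / 2) ∧ ∀ ⦃ε ρ : ℝ⦄ ⦃u : E → ℝ⦄, 0 < ε → ε ≤ ε₂ →
      ρ ≤ ε ^ 2 * κ → Measurable u → LocallyIntegrable u μ → (∀ x ∈ ball (0 : E) 3, 0 ≤ u x) →
      (∀ x ∈ ball (0 : E) 3, IsSupersolutionAt μ Λ β ε ρ u x) →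
      μ.real (ball (0 : E) (1 / 2)) ≤
        2 * μ.real {x ∈ ball (0 : E) (1 / 2) | 1 / 2 ≤ ⨍ y in ball x (ε / 2), u y ∂μ} →
      ∀ x ∈ ball (0 : E) 1, θ ≤ u x := by
  obtain ⟨ε₁, κ, ν, θ, ε₁_pos, hΛε₁, κ_pos, ⟨ν_pos, -⟩, hθ, H⟩ :=
    exists_measureToPoint μ hΛ hβ.1
  obtain ⟨n, hn⟩ := pow_unbounded_of_one_lt (2 * 2 ^ finrank ℝ E)
    (lt_add_of_pos_right 1 (by positivity : 0 < ν / 5 ^ finrank ℝ E))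
  set k := ⌈2 / ε₁⌉₊
  set T := spreadConst (finrank ℝ E) β ^ (k + 1)
  have spread_pos := spreadConst_pos (finrank ℝ E) hβ.1
  have spread_le := spreadConst_le (finrank ℝ E) hβ.2
  have T_pos : 0 < T := pow_pos spread_pos _
  have T_le : T ≤ 1 / 2 :=
    (pow_le_of_le_one spread_pos.le (by linarith) k.succ_ne_zero).trans (by linarith)
  have θ_pow_pos : 0 < θ ^ n := pow_pos hθ.1 n
  refine ⟨min (ε₁ / 2) (1 / (k + 1)), min T (κ * (θ ^ n * T)), θ ^ n * T, by positivity,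
    by positivity, ⟨by positivity, (mul_le_of_le_one_left T_pos.le
      (pow_le_one₀ hθ.1.le hθ.2.le)).trans T_le⟩, ?_⟩
  intro ε ρ u hε hεle hρ hum hu hu₀ h half
  obtain ⟨hεε₁, hεk⟩ := le_min_iff.1 hεle
  rw [le_div_iff₀' (by positivity)] at hεk
  have ε_le : ε ≤ 1 :=
    (le_mul_of_one_le_left hε.le (le_add_of_nonneg_left k.cast_nonneg)).trans hεk
  refine H.le_of_half_measure hΛ hβ ε₁_pos (by linarith) κ_pos.le ν_pos hθ
    ((Nat.le_ceil _).trans (le_add_of_nonneg_right zero_le_one)) hn hε hεε₁ hεk hum hu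
    hu₀ h ?_ ?_ half
  · calc ρ ≤ ε ^ 2 * T := hρ.trans (by gcongr; exact min_le_left _ _)
      _ ≤ T := mul_le_of_le_one_left T_pos.le (pow_le_one₀ hε.le ε_le)
  · exact hρ.trans (by gcongr; exact min_le_right _ _)

theorem exists_le_or_le_one_sub (hΛ : 1 ≤ Λ) (hβ : β ∈ Ioc 0 1) :
    ∃ ε₂ κ θ : ℝ, 0 < ε₂ ∧ 0 < κ ∧ θ ∈ Ioc 0 (1 / 2) ∧ ∀ ⦃ε ρ : ℝ⦄ ⦃u : E → ℝ⦄, 0 < ε → ε ≤ ε₂ →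
      ρ ≤ ε ^ 2 * κ → Measurable u → LocallyIntegrable u μ →
      (∀ x ∈ ball (0 : E) 3, u x ∈ Icc 0 1) →
      (∀ x ∈ ball (0 : E) 3, IsSupersolutionAt μ Λ β ε ρ u x) →
      (∀ x ∈ ball (0 : E) 3, IsSupersolutionAt μ Λ β ε ρ (fun y => 1 - u y) x) →
      (∀ x ∈ ball (0 : E) 1, θ ≤ u x) ∨ ∀ x ∈ ball (0 : E) 1, θ ≤ 1 - u x := by
  obtain ⟨ε₂, κ, θ, hε₂, hκ, hθ, H⟩ := exists_le_of_half_measure μ hΛ hβ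
  refine ⟨ε₂, κ, θ, hε₂, hκ, hθ, fun ε ρ u hε hεle hρ hum hu hu₀₁ hsup hsub => ?_⟩
  exact (half_measure_or_half_measure_one_sub (half_pos hε) hu 0 (1 / 2)).imp
    (H hε hεle hρ hum hu (fun x hx => (hu₀₁ x hx).1) hsup)
    (H hε hεle hρ (by fun_prop) ((locallyIntegrable_const 1).sub hu)
      (fun x hx => sub_nonneg.2 (hu₀₁ x hx).2) hsub)

variable {μ} in
theorem IsSupersolutionAt.rescale_one_sub {ε ρ r w : ℝ} {u : E → ℝ} {x₀ p : E} (hε : 0 < ε)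
    (hr : 0 < r) (hw : 0 < w) (a : ℝ) (hu : LocallyIntegrable u μ)
    (h : IsSupersolutionAt μ Λ β ε ρ (fun y => -u y) (x₀ + r • p)) :
    IsSupersolutionAt μ Λ β (ε / r) (ρ / w) (fun q => 1 - (u (x₀ + r • q) - a) / w) p := by
  have rescaled := h.rescale hε hr hw (-(a + w)) hu.neg
  convert rescaled using 2
  simp only [Pi.neg_apply]
  field_simp
  ring

variable (Λ β) in
/-- If `u` and `-u` are supersolutions up to the error `F ε²` on a ball of radius `3 r`, then the
oscillation of `u` decreases by the factor `1 - θ` from that ball to the concentric ball of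
radius `r`. This holds as long as the step size is `ε ≤ ε₂ r` and `F r²` is at most `κ` times the
oscillation. -/
def OscillationDecay (ε₂ κ θ : ℝ) : Prop :=
  ∀ ⦃ε r F a w : ℝ⦄ ⦃x₀ : E⦄ ⦃u : E → ℝ⦄, 0 < ε → 0 < r → ε ≤ ε₂ * r → F * r ^ 2 ≤ κ * w →
    Measurable u → LocallyIntegrable u μ → (∀ x ∈ ball x₀ (r * 3), u x ∈ Icc a (a + w)) →
    (∀ x ∈ ball x₀ (r * 3), IsSupersolutionAt μ Λ β ε (ε ^ 2 * F) u x) →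
    (∀ x ∈ ball x₀ (r * 3), IsSupersolutionAt μ Λ β ε (ε ^ 2 * F) (fun y => -u y) x) →
    ∃ a', ∀ x ∈ ball x₀ r, u x ∈ Icc a' (a' + (1 - θ) * w)

theorem exists_oscillationDecay (hΛ : 1 ≤ Λ) (hβ : β ∈ Ioc 0 1) :
    ∃ ε₂ κ θ : ℝ, 0 < ε₂ ∧ 0 < κ ∧ θ ∈ Ioc 0 (1 / 2) ∧ OscillationDecay μ Λ β ε₂ κ θ := by
  obtain ⟨ε₂, κ, θ, hε₂, hκ, hθ, H⟩ := exists_le_or_le_one_sub μ hΛ hβ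
  refine ⟨ε₂, κ, θ, hε₂, hκ, hθ, ?_⟩
  intro ε r F a w x₀ u hε hr hεr hF hum hu osc hsup hsub
  have w_nonneg : 0 ≤ w := by
    have := osc x₀ (mem_ball_self (by positivity))
    linarith [this.1, this.2]
  rcases w_nonneg.eq_or_lt with rfl | w_pos
  · exact ⟨a, fun x hx => by simpa using osc x (ball_subset_ball (by linarith) hx)⟩
  have error_le : ε ^ 2 * F / w ≤ (ε / r) ^ 2 * κ := by
    rw [div_le_iff₀ w_pos, div_pow, div_mul_eq_mul_div, div_mul_eq_mul_div, le_div_iff₀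
      (by positivity)]
    calc ε ^ 2 * F * r ^ 2 = ε ^ 2 * (F * r ^ 2) := by ring
      _ ≤ ε ^ 2 * (κ * w) := by gcongr
      _ = _ := by ring
  have mem {q : E} (hq : q ∈ ball 0 3) : x₀ + r • q ∈ ball x₀ (r * 3) :=
    (add_smul_mem_ball_iff hr).2 hq
  have decay := H (div_pos hε hr) ((div_le_iff₀ hr).2 hεr) error_le
    (u := fun q => (u (x₀ + r • q) - a) / w) (by fun_prop)
    (locallyIntegrable_rescale hu x₀ hr.ne' a w)
    (fun q hq => ⟨div_nonneg (sub_nonneg.2 (osc _ (mem hq)).1) w_pos.le,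
      (div_le_one w_pos).2 (by linarith [(osc _ (mem hq)).2])⟩)
    (fun q hq => (hsup _ (mem hq)).rescale hε hr w_pos a hu)
    (fun q hq => (hsub _ (mem hq)).rescale_one_sub hε hr w_pos a hu)
  have osc_ball {x : E} (hx : x ∈ ball x₀ r) :=
    osc x (ball_subset_ball (le_mul_of_one_le_right hr.le (by norm_num)) hx)
  rcases decay with lower | upper
  · refine ⟨a + θ * w, fun x hx => ?_⟩
    obtain ⟨q, hq, rfl⟩ := exists_add_smul_eq_of_mem_ball hr ((mul_one r).symm ▸ hx)
    have := (le_div_iff₀ w_pos).1 (lower q hq)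
    constructor <;> linarith [(osc_ball hx).2]
  · refine ⟨a, fun x hx => ⟨(osc_ball hx).1, ?_⟩⟩
    obtain ⟨q, hq, rfl⟩ := exists_add_smul_eq_of_mem_ball hr ((mul_one r).symm ▸ hx)
    have := (div_le_iff₀ w_pos).1 (le_sub_comm.1 (upper q hq))
    linarith

end OscillationDecay

section Holder

theorem exists_rpow_eq {q σ : ℝ} (hq : 0 < q) (hqσ : q < σ) (hσ : σ < 1) :
    ∃ γ ∈ Ioo (0 : ℝ) 1, q ^ γ = σ := by
  have q_lt_one := hqσ.trans hσ
  have σ_pos := hq.trans hqσ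
  refine ⟨Real.logb q σ, ⟨Real.logb_pos_of_base_lt_one hq q_lt_one σ_pos hσ, ?_⟩,
    Real.rpow_logb hq q_lt_one.ne σ_pos⟩
  rwa [Real.logb_lt_iff_lt_rpow_of_base_lt_one hq q_lt_one σ_pos, Real.rpow_one]

theorem le_inv_mul_mul_rpow_of_forall_le_pow {q γ d v ω : ℝ} (hq : 0 < q) (hq₁ : q < 1)
    (hγ : 0 ≤ γ) (hd : 0 < d) (hω : 0 ≤ ω) (hv : v ≤ ω)
    (h : ∀ k : ℕ, d ≤ q ^ k → v ≤ (q ^ γ) ^ k * ω) : v ≤ (q ^ γ)⁻¹ * ω * d ^ γ := by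
  have factor_pos : 0 < q ^ γ := by positivity
  rw [mul_assoc, ← div_eq_inv_mul, le_div_iff₀' factor_pos]
  rcases le_total d 1 with d_le | le_d
  · obtain ⟨k, pow_lt, le_pow⟩ := exists_nat_pow_near_of_lt_one hd d_le hq hq₁
    calc q ^ γ * v ≤ q ^ γ * ((q ^ γ) ^ k * ω) := by gcongr; exact h k le_pow
      _ = ω * (q ^ (k + 1)) ^ γ := by
        rw [← Real.rpow_pow_comm hq.le]; ring
      _ ≤ ω * d ^ γ := by gcongr
  · calc q ^ γ * v ≤ q ^ γ * ω := by gcongr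
      _ ≤ ω := mul_le_of_le_one_left hω (Real.rpow_le_one hq.le hq₁.le hγ)
      _ ≤ ω * d ^ γ := le_mul_of_one_le_right hω (Real.one_le_rpow le_d hγ)

theorem add_div_rpow_le {a b c γ : ℝ} (ha : 0 ≤ a) (hb : 0 ≤ b) (hc : 0 < c) (hγ : 0 ≤ γ)
    (hγ₁ : γ ≤ 1) : (a + b / c) ^ γ ≤ (1 + (c ^ γ)⁻¹) * (a ^ γ + b ^ γ) := by
  calc (a + b / c) ^ γ ≤ a ^ γ + (b / c) ^ γ :=
        Real.rpow_add_le_add_rpow ha (by positivity) hγ hγ₁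
    _ = 1 * a ^ γ + (c ^ γ)⁻¹ * b ^ γ := by
      rw [Real.div_rpow hb hc.le, one_mul, div_eq_inv_mul]
    _ ≤ (1 + (c ^ γ)⁻¹) * a ^ γ + (1 + (c ^ γ)⁻¹) * b ^ γ := by
      gcongr
      · exact le_add_of_nonneg_right (by positivity)
      · exact le_add_of_nonneg_left zero_le_one
    _ = _ := by ring

variable {E : Type*} [NormedAddCommGroup E]

theorem OscillationDecay.exists_mem_Icc_pow [InnerProductSpace ℝ E] [FiniteDimensional ℝ E]
    [MeasurableSpace E] [BorelSpace E] {μ : Measure E} [μ.IsAddHaarMeasure]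
    {Λ β ε₂ κ θ ε R F a ω : ℝ} {x₀ : E} {u : E → ℝ} (H : OscillationDecay μ Λ β ε₂ κ θ)
    (hε₂ : 0 ≤ ε₂) (hθ : θ ≤ 1 / 2) (hε : 0 < ε) (hR : 0 < R) (hF : 0 ≤ F)
    (hFω : F * R ^ 2 ≤ κ * ω) (hum : Measurable u) (hu : LocallyIntegrable u μ)
    (osc : ∀ x ∈ ball x₀ R, u x ∈ Icc a (a + ω))
    (hsup : ∀ x ∈ ball x₀ R, IsSupersolutionAt μ Λ β ε (ε ^ 2 * F) u x)
    (hsub : ∀ x ∈ ball x₀ R, IsSupersolutionAt μ Λ β ε (ε ^ 2 * F) (fun y => -u y) x) (k : ℕ)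
    (hεk : ε ≤ ε₂ * ((1 / 3) ^ k * R)) :
    ∃ b, ∀ x ∈ ball x₀ ((1 / 3) ^ k * R), u x ∈ Icc b (b + (1 - θ) ^ k * ω) := by
  have one_sub_nonneg : 0 ≤ 1 - θ := by linarith
  induction k with
  | zero => exact ⟨a, by simpa using osc⟩
  | succ k ih =>
    set r := (1 / 3 : ℝ) ^ (k + 1) * R
    have r_pos : 0 < r := by positivity
    have r_mul_three : (1 / 3) ^ k * R = r * 3 := by simp only [r, pow_succ]; ring
    rw [r_mul_three] at ih
    have r_le : r ≤ r * 3 := le_mul_of_one_le_right r_pos.le (by norm_num)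
    obtain ⟨b, hb⟩ := ih (hεk.trans (by gcongr))
    have subset : ball x₀ (r * 3) ⊆ ball x₀ R := by
      rw [← r_mul_three]
      exact ball_subset_ball (mul_le_of_le_one_left hR.le (pow_le_one₀ (by norm_num) (by norm_num)))
    have error_le : F * r ^ 2 ≤ κ * ((1 - θ) ^ k * ω) := by
      calc F * r ^ 2 = (1 / 9) * (1 / 9) ^ k * (F * R ^ 2) := by
            simp only [r, mul_pow, ← pow_mul, mul_comm _ 2]
            rw [pow_mul, pow_succ]; norm_num; ring
        _ ≤ 1 * (1 - θ) ^ k * (F * R ^ 2) := by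
            gcongr
            · norm_num
            · linarith
        _ ≤ 1 * (1 - θ) ^ k * (κ * ω) := by gcongr
        _ = _ := by ring
    rw [pow_succ', mul_assoc]
    exact H hε r_pos hεk error_le hum hu hb (fun x hx => hsup x (subset hx))
      fun x hx => hsub x (subset hx)

theorem OscillationDecay.abs_sub_le_pow_mul [InnerProductSpace ℝ E] [FiniteDimensional ℝ E]
    [MeasurableSpace E] [BorelSpace E] {μ : Measure E} [μ.IsAddHaarMeasure]
    {Λ β ε₂ κ θ ε R F a ω : ℝ} {x z : E} {u : E → ℝ} (H : OscillationDecay μ Λ β ε₂ κ θ)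
    (hε₂ : 0 < ε₂) (hθ : θ ≤ 1 / 2) (hε : 0 < ε) (hR : 0 < R) (hF : 0 ≤ F)
    (hFω : F * R ^ 2 ≤ κ * ω) (hum : Measurable u) (hu : LocallyIntegrable u μ)
    (osc : ∀ y ∈ ball x R, u y ∈ Icc a (a + ω))
    (hsup : ∀ y ∈ ball x R, IsSupersolutionAt μ Λ β ε (ε ^ 2 * F) u y)
    (hsub : ∀ y ∈ ball x R, IsSupersolutionAt μ Λ β ε (ε ^ 2 * F) (fun y => -u y) y) (k : ℕ)
    (hk : dist x z + ε / ε₂ ≤ (1 / 3) ^ k * R) : |u x - u z| ≤ (1 - θ) ^ k * ω := by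
  have hεk : ε ≤ ε₂ * ((1 / 3) ^ k * R) :=
    (div_le_iff₀' hε₂).1 ((le_add_of_nonneg_left dist_nonneg).trans hk)
  have hz : z ∈ ball x ((1 / 3) ^ k * R) :=
    mem_ball'.2 ((lt_add_of_pos_right _ (div_pos hε hε₂)).trans_le hk)
  obtain ⟨b, hb⟩ := H.exists_mem_Icc_pow hε₂.le hθ hε hR hF hFω hum hu osc hsup hsub k hεk
  simpa only [Real.dist_eq, add_sub_cancel_left] using
    Real.dist_le_of_mem_Icc (hb x (mem_ball_self (by positivity))) (hb z hz)

theorem exists_holder_estimate [InnerProductSpace ℝ E] [FiniteDimensional ℝ E]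
    [MeasurableSpace E] [BorelSpace E] (μ : Measure E) [μ.IsAddHaarMeasure] {Λ β : ℝ}
    (hΛ : 1 ≤ Λ) (hβ : β ∈ Ioc 0 1) :
    ∃ C γ : ℝ, 0 < C ∧ γ ∈ Ioo (0 : ℝ) 1 ∧ ∀ ⦃ε R S F : ℝ⦄ ⦃x₀ : E⦄ ⦃u : E → ℝ⦄,
      0 < ε → 0 < R → 0 ≤ F → Measurable u → LocallyIntegrable u μ →
      (∀ x ∈ ball x₀ (2 * R), |u x| ≤ S) →
      (∀ x ∈ ball x₀ (2 * R), IsSupersolutionAt μ Λ β ε (ε ^ 2 * F) u x) →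
      (∀ x ∈ ball x₀ (2 * R), IsSupersolutionAt μ Λ β ε (ε ^ 2 * F) (fun y => -u y) x) →
      ∀ x ∈ ball x₀ R, ∀ z ∈ ball x₀ R,
        |u x - u z| ≤ C / R ^ γ * (S + R ^ 2 * F) * (dist x z ^ γ + ε ^ γ) := by
  obtain ⟨ε₂, κ, θ, hε₂, hκ, ⟨θ_pos, θ_le⟩, H⟩ := exists_oscillationDecay μ hΛ hβ
  obtain ⟨γ, hγ, rpow_γ⟩ := exists_rpow_eq (q := 1 / 3) (σ := 1 - θ) (by norm_num) (by linarith)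
    (by linarith)
  have one_sub_pos : 0 < 1 - θ := by linarith
  refine ⟨(1 - θ)⁻¹ * (2 + κ⁻¹) * (1 + (ε₂ ^ γ)⁻¹), γ, by positivity, hγ, ?_⟩
  intro ε R S F x₀ u hε hR hF hum hu hS hsup hsub x hx z hz
  set ω := (2 + κ⁻¹) * (S + R ^ 2 * F)
  set d := dist x z + ε / ε₂
  have subset : ball x R ⊆ ball x₀ (2 * R) :=
    ball_subset_ball' (by linarith [mem_ball.1 hx])
  have S_nonneg : 0 ≤ S := (abs_nonneg _).trans (hS x (subset (mem_ball_self hR)))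
  have ω_ge : 2 * S ≤ ω := by
    calc 2 * S ≤ 2 * (S + R ^ 2 * F) := by gcongr; exact le_add_of_nonneg_right (by positivity)
      _ ≤ ω := by simp only [ω]; gcongr; exact le_add_of_nonneg_right (by positivity)
  have error_le : F * R ^ 2 ≤ κ * ω := by
    calc F * R ^ 2 ≤ S + R ^ 2 * F := by rw [mul_comm F]; exact le_add_of_nonneg_left S_nonneg
      _ ≤ 2 * κ * (S + R ^ 2 * F) + (S + R ^ 2 * F) := le_add_of_nonneg_left (by positivity)
      _ = κ * ω := by simp only [ω]; field_simp
  have osc (y : E) (hy : y ∈ ball x R) : u y ∈ Icc (-S) (-S + ω) := by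
    have := abs_le.1 (hS y (subset hy))
    constructor <;> linarith
  have decay (k : ℕ) (hk : d / R ≤ (1 / 3) ^ k) : |u x - u z| ≤ ((1 / 3) ^ γ) ^ k * ω := by
    rw [rpow_γ]
    exact H.abs_sub_le_pow_mul hε₂ θ_le hε hR hF error_le hum hu osc
      (fun y hy => hsup y (subset hy)) (fun y hy => hsub y (subset hy)) k ((div_le_iff₀ hR).1 hk)
  have d_pos : 0 < d := by positivity
  have u_sub_le : |u x - u z| ≤ ω := by
    have bound {y : E} (hy : y ∈ ball x₀ R) : |u y| ≤ S :=
      hS y (ball_subset_ball (by linarith) hy)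
    linarith [abs_sub (u x) (u z), bound hx, bound hz]
  calc |u x - u z| ≤ ((1 / 3) ^ γ)⁻¹ * ω * (d / R) ^ γ :=
        le_inv_mul_mul_rpow_of_forall_le_pow (by norm_num) (by norm_num) hγ.1.le (by positivity)
          (by positivity) u_sub_le decay
    _ = (1 - θ)⁻¹ * ω / R ^ γ * d ^ γ := by
      rw [rpow_γ, Real.div_rpow d_pos.le hR.le]; ring
    _ ≤ (1 - θ)⁻¹ * ω / R ^ γ * ((1 + (ε₂ ^ γ)⁻¹) * (dist x z ^ γ + ε ^ γ)) := by
      gcongr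
      exact add_div_rpow_le dist_nonneg hε.le hε₂ hγ.1.le hγ.2.le
    _ = _ := by ring

end Holder

section Pucci

variable {N : ℕ} {Λ β ε F : ℝ} {u : EuclideanSpace ℝ (Fin N) → ℝ} {x : EuclideanSpace ℝ (Fin N)}

theorem setAverage_secondDiff (hε : 0 < ε) (hu : LocallyIntegrable u volume) :
    ⨍ y in ball 0 1, secondDiff N u x (ε • y) = 2 * ((⨍ y in ball x ε, u y) - u x) := by
  have average (s : ℝ) (hs : |s| = ε) : ⨍ y in ball 0 1, u (x + s • y) = ⨍ y in ball x ε, u y := by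
    rw [setAverage_comp_add_smul u x 0 (abs_pos.1 (hs ▸ hε)), smul_zero, add_zero, mul_one, hs]
  have integrable (s : ℝ) (hs : |s| = ε) : IntegrableOn (fun y => u (x + s • y)) (ball 0 1) :=
    integrableOn_ball_of_locallyIntegrable
      (locallyIntegrable_comp_add_smul hu x (abs_pos.1 (hs ▸ hε))) 0 1
  have abs_ε := abs_of_pos hε
  have abs_neg_ε := (abs_neg ε).trans abs_ε
  have volume_pos := measureReal_ball_pos (μ := volume) (0 : EuclideanSpace ℝ (Fin N)) one_pos
  calc ⨍ y in ball 0 1, secondDiff N u x (ε • y)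
      = ⨍ y in ball 0 1, (u (x + ε • y) + u (x + -ε • y) - 2 * u x) := by
        simp only [secondDiff, neg_smul, ← sub_eq_add_neg]
    _ = (⨍ y in ball 0 1, u (x + ε • y)) + (⨍ y in ball 0 1, u (x + -ε • y)) - 2 * u x := by
      simp only [setAverage_eq, smul_eq_mul]
      rw [integral_sub ((integrable ε abs_ε).fun_add (integrable (-ε) abs_neg_ε))
        (integrableOn_const measure_ball_lt_top.ne),
        integral_add (integrable ε abs_ε) (integrable (-ε) abs_neg_ε),
        setIntegral_const, smul_eq_mul]
      field_simp
    _ = _ := by rw [average ε abs_ε, average (-ε) abs_neg_ε]; ring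

theorem secondDiff_neg (y : EuclideanSpace ℝ (Fin N)) :
    secondDiff N (fun y => -u y) x y = -secondDiff N u x y := by
  simp only [secondDiff]
  ring

theorem lepsMinus_neg (α : ℝ) :
    LepsMinus N Λ α β ε (fun y => -u y) x = -LepsPlus N Λ α β ε u x := by
  have image_eq : (fun z => secondDiff N (fun y => -u y) x (ε • z)) '' ball 0 Λ
      = -((fun z => secondDiff N u x (ε • z)) '' ball 0 Λ) := by
    simp only [secondDiff_neg, ← image_neg_eq_neg, image_image]
  rw [LepsMinus, LepsPlus, image_eq, Real.sInf_neg]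
  simp only [secondDiff_neg, setAverage_eq, integral_neg, smul_neg]
  ring

theorem isSupersolutionAt_of_lepsMinus_le (hΛ : 0 < Λ) (hβ : β ≤ 1) (hε : 0 < ε)
    (hu : LocallyIntegrable u volume) (h : LepsMinus N Λ (1 - β) β ε u x ≤ F) :
    IsSupersolutionAt volume Λ β ε (ε ^ 2 * F) u x := by
  intro m hm
  have le_sInf : 2 * (m - u x) ≤ sInf ((fun z => secondDiff N u x (ε • z)) '' ball 0 Λ) := by
    refine le_csInf ((nonempty_ball.2 hΛ).image _) (forall_mem_image.2 fun z hz => ?_)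
    have mem : ε • z ∈ ball 0 (Λ * ε) := by
      rw [mem_ball_zero_iff, norm_smul, Real.norm_of_nonneg hε.le, mul_comm]
      exact mul_lt_mul_of_pos_right (mem_ball_zero_iff.1 hz) hε
    rw [secondDiff]
    linarith [hm _ mem]
  rw [LepsMinus, setAverage_secondDiff hε hu, one_div, inv_mul_le_iff₀ (by positivity)] at h
  have := mul_le_mul_of_nonneg_left le_sInf (sub_nonneg.2 hβ)
  linarith

end Pucci

theorem le_sSup_image_abs {X : Type*} {g : X → ℝ} (hg : ∃ M, ∀ y, |g y| ≤ M) {s : Set X} {x : X}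
    (hx : x ∈ s) : |g x| ≤ sSup ((fun y => |g y|) '' s) := by
  obtain ⟨M, hM⟩ := hg
  exact le_csSup ⟨M, forall_mem_image.2 fun y _ => hM y⟩ (mem_image_of_mem _ hx)

theorem holder_estimate_pucci_general (N : ℕ) (Λ β : ℝ) (hΛ : 1 ≤ Λ)
    (hβ : β ∈ Set.Ioc (0 : ℝ) 1) :
    ∃ C γ : ℝ, 0 < C ∧ γ ∈ Set.Ioo (0 : ℝ) 1 ∧
      ∀ R ε : ℝ, 0 < R → 0 < ε →
      ∀ f u : EuclideanSpace ℝ (Fin N) → ℝ,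
        (∃ M, ∀ y, |f y| ≤ M) →
        Measurable u → (∃ M, ∀ y, |u y| ≤ M) →
        (∀ x ∈ ball (0 : EuclideanSpace ℝ (Fin N)) (2 * R),
          LepsPlus N Λ (1 - β) β ε u x ≥ -|f x| ∧ LepsMinus N Λ (1 - β) β ε u x ≤ |f x|) →
        ∀ x ∈ ball (0 : EuclideanSpace ℝ (Fin N)) R,
        ∀ z ∈ ball (0 : EuclideanSpace ℝ (Fin N)) R,
          |u x - u z| ≤ (C / R ^ γ) *
            ((sSup ((fun y => |u y|) '' ball (0 : EuclideanSpace ℝ (Fin N)) (2 * R))) +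
              R ^ 2 * sSup ((fun y => |f y|) '' ball (0 : EuclideanSpace ℝ (Fin N)) (2 * R))) *
            (dist x z ^ γ + ε ^ γ) := by
  obtain ⟨C, γ, hC, hγ, H⟩ := exists_holder_estimate
    (volume : Measure (EuclideanSpace ℝ (Fin N))) hΛ hβ
  refine ⟨C, γ, hC, hγ, fun R ε hR hε f u hf hum hu hL => ?_⟩
  have hu_int : LocallyIntegrable u volume := by
    obtain ⟨M, hM⟩ := hu
    exact (locallyIntegrable_const M).mono hum.aestronglyMeasurable
      (.of_forall fun y => (hM y).trans (le_abs_self M))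
  have sup_f_nonneg : 0 ≤ sSup ((fun y => |f y|) '' ball 0 (2 * R)) :=
    (abs_nonneg _).trans (le_sSup_image_abs hf (mem_ball_self (by positivity)))
  have hΛ_pos := one_pos.trans_le hΛ
  refine H hε hR sup_f_nonneg hum hu_int (fun x hx => le_sSup_image_abs hu hx)
    (fun x hx => ?_) (fun x hx => ?_)
  · exact isSupersolutionAt_of_lepsMinus_le hΛ_pos hβ.2 hε hu_int
      ((hL x hx).2.trans (le_sSup_image_abs hf hx))
  · refine isSupersolutionAt_of_lepsMinus_le hΛ_pos hβ.2 hε hu_int.neg ?_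
    rw [lepsMinus_neg]
    exact (neg_le.1 (hL x hx).1).trans (le_sSup_image_abs hf hx)

/-- asymptotic Hölder estimate for functions satisfying the Pucci-type
inequalities `L⁺_ε u ≥ −|f|` and `L⁻_ε u ≤ |f|` in `B_{2R}`. -/
theorem holder_estimate_pucci (N : ℕ) (hN : 1 ≤ N) (Λ β : ℝ) (hΛ : 1 ≤ Λ)
    (hβ : β ∈ Set.Ioc (0 : ℝ) 1) :
    ∃ ε₀ C γ : ℝ, 0 < ε₀ ∧ 0 < C ∧ γ ∈ Set.Ioo (0 : ℝ) 1 ∧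
      ∀ R ε : ℝ, 0 < R → 0 < ε → ε < ε₀ * R →
      ∀ f u : EuclideanSpace ℝ (Fin N) → ℝ,
        Measurable f → (∃ M, ∀ y, |f y| ≤ M) →
        Measurable u → (∃ M, ∀ y, |u y| ≤ M) →
        (∀ x ∈ ball (0 : EuclideanSpace ℝ (Fin N)) (2 * R),
          LepsPlus N Λ (1 - β) β ε u x ≥ -|f x| ∧ LepsMinus N Λ (1 - β) β ε u x ≤ |f x|) →
        ∀ x ∈ ball (0 : EuclideanSpace ℝ (Fin N)) R,
        ∀ z ∈ ball (0 : EuclideanSpace ℝ (Fin N)) R,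
          |u x - u z| ≤ (C / R ^ γ) *
            ((sSup ((fun y => |u y|) '' ball (0 : EuclideanSpace ℝ (Fin N)) (2 * R))) +
              R ^ 2 * sSup ((fun y => |f y|) '' ball (0 : EuclideanSpace ℝ (Fin N)) (2 * R))) *
            (dist x z ^ γ + ε ^ γ) := by
  obtain ⟨C, γ, hC, hγ, H⟩ := holder_estimate_pucci_general N Λ β hΛ hβ
  exact ⟨1, C, γ, one_pos, hC, hγ, fun R ε hR hε _ f u _ hf hu hub hL =>
    H R ε hR hε f u hf hu hub hL⟩
end
end

section
/- Let C = αΛ² + β ⨍_{B_1} |y|² dy = αΛ² + βN/(N+2). Then the sequence of random variables M_k = |X_k − x_0|² − C k ε², k ≥ 0, is a supermartingale with respect to the filtration (F_k). -/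
open MeasureTheory Metric

noncomputable section

/-!
One step of the walk from `x` adds to `|x - x₀|²` a cross term, which vanishes because both kinds
of jump are centred, and the mean squared length of the jump: at most `Λ² ε²` with probability
`1 - β`, and exactly `ε² N / (N + 2)` with probability `β`. The transition rule is only known for
bounded test functions, so the drift inequality is first obtained for the truncations
`min (|X_{k+1} - x₀|²) n`; letting `n → ∞`, Fatou's lemma yields the integrability of
`|X_{k+1} - x₀|²` and conditional dominated convergence the inequality itself.
-/

open Filter Module Set Topology

section Truncation

variable {Ω : Type*} {m m0 : MeasurableSpace Ω} {μ : Measure Ω} [IsFiniteMeasure μ] {f h : Ω → ℝ}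

lemma tendsto_min_natCast_atTop (a : ℝ) : Tendsto (fun n : ℕ => min a n) atTop (𝓝 a) :=
  tendsto_atTop_of_eventually_const (i₀ := ⌈a⌉₊) fun _ hn => min_eq_left (Nat.ceil_le.mp hn)

lemma integrable_min_natCast (hf : AEStronglyMeasurable f μ) (hf0 : 0 ≤ f) (n : ℕ) :
    Integrable (fun ω => min (f ω) n) μ := by
  refine .of_bound (hf.inf aestronglyMeasurable_const) n (.of_forall fun ω => ?_)
  rw [Real.norm_of_nonneg (le_min (hf0 ω) n.cast_nonneg)]
  exact min_le_right _ _

lemma integrable_of_forall_integral_min_natCast_le (hf : AEStronglyMeasurable f μ) (hf0 : 0 ≤ f)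
    {C : ℝ} (hC : ∀ n : ℕ, ∫ ω, min (f ω) n ∂μ ≤ C) : Integrable f μ := by
  have htrunc (n : ℕ) : ∫⁻ ω, ENNReal.ofReal (min (f ω) n) ∂μ ≤ ENNReal.ofReal C := by
    rw [← ofReal_integral_eq_lintegral_ofReal (integrable_min_natCast hf hf0 n)
      (.of_forall fun ω => le_min (hf0 ω) n.cast_nonneg)]
    exact ENNReal.ofReal_le_ofReal (hC n)
  have hfatou : ∫⁻ ω, ENNReal.ofReal (f ω) ∂μ ≤ ENNReal.ofReal C :=
    calc ∫⁻ ω, ENNReal.ofReal (f ω) ∂μ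
      _ = ∫⁻ ω, liminf (fun n : ℕ => ENNReal.ofReal (min (f ω) n)) atTop ∂μ :=
        lintegral_congr fun ω =>
          (ENNReal.tendsto_ofReal (tendsto_min_natCast_atTop (f ω))).liminf_eq.symm
      _ ≤ liminf (fun n : ℕ => ∫⁻ ω, ENNReal.ofReal (min (f ω) n) ∂μ) atTop :=
        lintegral_liminf_le' fun n => (integrable_min_natCast hf hf0 n).aemeasurable.ennreal_ofReal
      _ ≤ ENNReal.ofReal C := liminf_le_of_le (h := fun b hb =>
        let ⟨_, hn⟩ := hb.exists; hn.trans (htrunc _))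
  exact (lintegral_ofReal_ne_top_iff_integrable hf (.of_forall hf0)).mp
    (ne_top_of_le_ne_top ENNReal.ofReal_ne_top hfatou)

lemma integrable_of_forall_condExp_min_natCast_le (hm : m ≤ m0) (hf : AEStronglyMeasurable f μ)
    (hf0 : 0 ≤ f) (hh : Integrable h μ)
    (hfh : ∀ n : ℕ, μ[fun ω => min (f ω) n | m] ≤ᵐ[μ] h) : Integrable f μ :=
  integrable_of_forall_integral_min_natCast_le hf hf0 (C := ∫ ω, h ω ∂μ) fun n =>
    (integral_condExp hm).symm.trans_le (integral_mono_ae integrable_condExp hh (hfh n))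

lemma condExp_le_of_forall_condExp_min_natCast_le (hm : m ≤ m0) (hf : Integrable f μ)
    (hf0 : 0 ≤ f) (hh : Integrable h μ)
    (hfh : ∀ n : ℕ, μ[fun ω => min (f ω) n | m] ≤ᵐ[μ] h) : μ[f | m] ≤ᵐ[μ] h := by
  have hlim : Tendsto (fun n : ℕ => condExpL1 hm μ fun ω => min (f ω) n) atTop
      (𝓝 (condExpL1 hm μ f)) := by
    refine tendsto_condExpL1_of_dominated_convergence hm f
      (fun n => (integrable_min_natCast hf.1 hf0 n).1) hf (fun n => .of_forall fun ω => ?_)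
      (.of_forall fun ω => tendsto_min_natCast_atTop (f ω))
    rw [Real.norm_of_nonneg (le_min (hf0 ω) n.cast_nonneg)]
    exact min_le_left _ _
  have hL1 : condExpL1 hm μ f ≤ hh.toL1 h := le_of_tendsto' hlim fun n =>
    (Lp.coeFn_le _ _).mp <| ((condExp_ae_eq_condExpL1 hm _).symm.trans_le (hfh n)).trans_eq
      hh.coeFn_toL1.symm
  exact (condExp_ae_eq_condExpL1 hm f).trans_le
    (((Lp.coeFn_le _ _).mpr hL1).trans_eq hh.coeFn_toL1)

theorem supermartingale_sub_mul_of_condExp_min_natCast_le {𝔉 : Filtration ℕ m0} {V : ℕ → Ω → ℝ}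
    {c : ℝ} (hadapted : StronglyAdapted 𝔉 V) (hnonneg : ∀ k, 0 ≤ V k) (hint0 : Integrable (V 0) μ)
    (hdrift : ∀ k (n : ℕ), μ[fun ω => min (V (k + 1) ω) n | 𝔉 k] ≤ᵐ[μ] fun ω => V k ω + c) :
    Supermartingale (fun k ω => V k ω - c * k) 𝔉 μ := by
  have hmeas k : AEStronglyMeasurable (V k) μ := ((hadapted k).mono (𝔉.le k)).aestronglyMeasurable
  have hint k : Integrable (V k) μ := by
    induction k with
    | zero => exact hint0
    | succ k ih =>
      exact integrable_of_forall_condExp_min_natCast_le (𝔉.le k) (hmeas (k + 1)) (hnonneg (k + 1))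
        (ih.add (integrable_const c)) (hdrift k)
  have hcond k : μ[V (k + 1) | 𝔉 k] ≤ᵐ[μ] fun ω => V k ω + c :=
    condExp_le_of_forall_condExp_min_natCast_le (𝔉.le k) (hint (k + 1)) (hnonneg (k + 1))
      ((hint k).add (integrable_const c)) (hdrift k)
  refine supermartingale_nat (fun k => (hadapted k).sub stronglyMeasurable_const)
    (fun k => (hint k).sub (integrable_const _)) fun k => ?_
  have hsub := condExp_sub (hint (k + 1)) (integrable_const (c * (k + 1 : ℕ))) (𝔉 k)
  rw [condExp_const (𝔉.le k)] at hsub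
  filter_upwards [hsub, hcond k] with ω hsubω hcondω
  refine hsubω.trans_le ?_
  rw [Pi.sub_apply]
  push_cast
  linarith

end Truncation

section Symmetric

variable {E : Type*} [NormedAddCommGroup E] [MeasurableSpace E] [BorelSpace E]

lemma isNegInvariant_of_forall_measure_eq {ρ : Measure E}
    (h : ∀ s, MeasurableSet s → ρ s = ρ (-s)) : ρ.IsNegInvariant :=
  ⟨Measure.ext fun s hs => by rw [Measure.neg_apply, h s hs]⟩

lemma isNegInvariant_restrict {ρ : Measure E} [ρ.IsNegInvariant] {s : Set E} (hs : -s = s) :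
    (ρ.restrict s).IsNegInvariant where
  neg_eq_self := by
    have hmap := (MeasurableEquiv.neg E).restrict_map ρ s
    change (ρ.neg).restrict s = (ρ.restrict (-s)).neg at hmap
    rw [hs, Measure.neg_eq_self] at hmap
    exact hmap.symm

lemma integral_id_eq_zero_of_isNegInvariant [NormedSpace ℝ E] (ρ : Measure E) [ρ.IsNegInvariant] :
    ∫ z, z ∂ρ = 0 :=
  have := IsAddTorsionFree.of_isTorsionFree ℝ E
  self_eq_neg.mp <| (integral_neg_eq_self id ρ).symm.trans (integral_neg id)

end Symmetric

lemma integral_norm_sq_le_sq {E : Type*} [NormedAddCommGroup E] [MeasurableSpace E]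
    {ρ : Measure E} [IsProbabilityMeasure ρ] {R : ℝ} (hR : ∀ᵐ z ∂ρ, ‖z‖ ≤ R) :
    ∫ z, ‖z‖ ^ 2 ∂ρ ≤ R ^ 2 := by
  refine (integral_mono_of_nonneg (.of_forall fun z => sq_nonneg ‖z‖)
    (integrable_const (R ^ 2)) ?_).trans_eq (by simp)
  filter_upwards [hR] with z hz
  gcongr

section SecondMoment

variable {Z H : Type*} [MeasurableSpace Z] {ρ : Measure Z} [IsFiniteMeasure ρ]
  [NormedAddCommGroup H]

lemma integrable_norm_add_sq {f : Z → H} (hf : MemLp f 2 ρ) (a : H) :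
    Integrable (fun z => ‖a + f z‖ ^ 2) ρ :=
  ((memLp_const a).add hf).integrable_norm_pow two_ne_zero

lemma average_norm_add_sq [InnerProductSpace ℝ H] [CompleteSpace H] [NeZero ρ] {f : Z → H}
    (hf : MemLp f 2 ρ) (hf0 : ∫ z, f z ∂ρ = 0) (a : H) :
    ⨍ z, ‖a + f z‖ ^ 2 ∂ρ = ‖a‖ ^ 2 + ⨍ z, ‖f z‖ ^ 2 ∂ρ := by
  have hfint : Integrable f ρ := hf.integrable one_le_two
  have hcross : ∫ z, inner ℝ a (f z) ∂ρ = 0 := by rw [integral_inner hfint, hf0, inner_zero_right]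
  have hintegral : ∫ z, ‖a + f z‖ ^ 2 ∂ρ = ρ.real univ * ‖a‖ ^ 2 + ∫ z, ‖f z‖ ^ 2 ∂ρ := by
    have hinner : Integrable (fun z => 2 * inner ℝ a (f z)) ρ := (hfint.const_inner a).const_mul 2
    have haffine : Integrable (fun z => ‖a‖ ^ 2 + 2 * inner ℝ a (f z)) ρ :=
      (integrable_const _).add hinner
    simp_rw [norm_add_sq_real]
    rw [integral_add haffine (hf.integrable_norm_pow two_ne_zero),
      integral_add (integrable_const _) hinner, integral_const_mul, hcross, integral_const,
      mul_zero, add_zero, smul_eq_mul]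
  rw [average_eq, average_eq, hintegral, smul_eq_mul, mul_add,
    inv_mul_cancel_left₀ measureReal_univ_ne_zero, smul_eq_mul]

end SecondMoment

lemma setAverage_ball_eq_setAverage_ball_zero {E F : Type*} [NormedAddCommGroup E]
    [MeasurableSpace E] [BorelSpace E] [NormedAddCommGroup F] [NormedSpace ℝ F] (μ : Measure E)
    [μ.IsAddHaarMeasure] (r : ℝ) (f : E → F) (x : E) :
    ⨍ y in ball x r, f y ∂μ = ⨍ z in ball 0 r, f (x + z) ∂μ := by
  have hpre : (x + ·) ⁻¹' ball x r = ball 0 r := by rw [preimage_add_ball, sub_self]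
  rw [setAverage_eq, setAverage_eq, Measure.addHaar_real_ball_center, ← hpre,
    (measurePreserving_add_left μ x).setIntegral_preimage_emb (measurableEmbedding_addLeft x)]

section Ball

variable {E : Type*} [NormedAddCommGroup E] [NormedSpace ℝ E] [FiniteDimensional ℝ E]
  [MeasurableSpace E] [BorelSpace E] (μ : Measure E) [μ.IsAddHaarMeasure] {r : ℝ}

lemma setIntegral_ball_norm_pow [Nontrivial E] (hr : 0 < r) (p : ℕ) :
    ∫ z in ball (0 : E) r, ‖z‖ ^ p ∂μ =
      μ.real (ball 0 r) * (r ^ p * (finrank ℝ E / (finrank ℝ E + p))) := by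
  set d := finrank ℝ E
  have hd : d - 1 + p + 1 = d + p := by have : 0 < d := finrank_pos; omega
  have hradial : ∫ t in Ioi (0 : ℝ), t ^ (d - 1) • (Iio r).indicator (fun t => t ^ p) t =
      r ^ (d + p) / (d + p) := by
    have hindicator : (fun t : ℝ => t ^ (d - 1) • (Iio r).indicator (fun t => t ^ p) t) =
        (Iio r).indicator fun t => t ^ (d - 1 + p) := by
      ext t
      simp only [indicator_apply, smul_eq_mul, mul_ite, mul_zero, pow_add]
    rw [hindicator, setIntegral_indicator measurableSet_Iio, Ioi_inter_Iio,
      ← integral_Ioc_eq_integral_Ioo, ← intervalIntegral.integral_of_le hr.le, integral_pow, hd,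
      zero_pow (by omega), sub_zero, ← Nat.cast_succ, Nat.succ_eq_add_one, hd, Nat.cast_add]
  have hball : μ.real (ball 0 r) = r ^ d * μ.real (ball 0 1) := by
    rw [measureReal_def, Measure.addHaar_ball_of_pos μ _ hr, ENNReal.toReal_mul,
      ENNReal.toReal_ofReal (by positivity), measureReal_def]
  calc ∫ z in ball (0 : E) r, ‖z‖ ^ p ∂μ
    _ = ∫ z, (Iio r).indicator (fun t => t ^ p) ‖z‖ ∂μ := by
      rw [← integral_indicator measurableSet_ball]
      simp [indicator]
    _ = d * (μ.real (ball 0 1) * (r ^ (d + p) / (d + p))) := by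
      rw [integral_fun_norm_addHaar, hradial, nsmul_eq_mul, smul_eq_mul]
    _ = μ.real (ball 0 r) * (r ^ p * (d / (d + p))) := by rw [hball, pow_add]; ring

lemma setAverage_ball_norm_pow [Nontrivial E] (hr : 0 < r) (p : ℕ) :
    ⨍ z in ball (0 : E) r, ‖z‖ ^ p ∂μ = r ^ p * (finrank ℝ E / (finrank ℝ E + p)) := by
  have hpos : 0 < μ.real (ball (0 : E) r) :=
    ENNReal.toReal_pos (measure_ball_pos μ 0 hr).ne' measure_ball_lt_top.ne
  rw [setAverage_eq, setIntegral_ball_norm_pow μ hr, smul_eq_mul, inv_mul_cancel_left₀ hpos.ne']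

end Ball

section StepMean

variable {E : Type*} [NormedAddCommGroup E] [NormedSpace ℝ E] [MeasurableSpace E]

/-- The one-step averaging operator of the walk: from `x`, jump by `ε • z` with `z` distributed
according to `ν x` with probability `1 - β`, and to a uniformly distributed point of the ball of
radius `ε` around `x` with probability `β`. Uniformity refers to the Haar measure `vol`. -/
def stepMean (vol : Measure E) (ν : E → Measure E) (β ε : ℝ) (g : E → ℝ) (x : E) : ℝ :=
  (1 - β) * ∫ z, g (x + ε • z) ∂ν x + β * ⨍ y in ball x ε, g y ∂vol

lemma stepMean_mono_of_nonneg {vol : Measure E} {ν : E → Measure E} {β ε : ℝ}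
    (hβ : β ∈ Icc (0 : ℝ) 1) {f g : E → ℝ} (hg : 0 ≤ g) (hgf : g ≤ f)
    {x : E} (hν : Integrable (fun z => f (x + ε • z)) (ν x))
    (hvol : IntegrableOn f (ball x ε) vol) :
    stepMean vol ν β ε g x ≤ stepMean vol ν β ε f x :=
  add_le_add
    (mul_le_mul_of_nonneg_left (integral_mono_of_nonneg (.of_forall fun z => hg (x + ε • z)) hν
      (.of_forall fun z => hgf (x + ε • z))) (sub_nonneg.mpr hβ.2))
    (mul_le_mul_of_nonneg_left (integral_mono_of_nonneg (.of_forall hg) hvol.to_average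
      (.of_forall hgf)) hβ.1)

end StepMean

section Walk

variable {E : Type*} [NormedAddCommGroup E] [InnerProductSpace ℝ E] [FiniteDimensional ℝ E]
  [MeasurableSpace E] [BorelSpace E]

lemma setAverage_ball_norm_sub_sq [Nontrivial E] (μ : Measure E) [μ.IsAddHaarMeasure] {r : ℝ}
    (hr : 0 < r) (x x₀ : E) :
    ⨍ y in ball x r, ‖y - x₀‖ ^ 2 ∂μ =
      ‖x - x₀‖ ^ 2 + r ^ 2 * (finrank ℝ E / (finrank ℝ E + 2)) := by
  have : IsFiniteMeasure (μ.restrict (ball 0 r)) := isFiniteMeasure_restrict.mpr (by finiteness)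
  have : NeZero (μ (ball 0 r)) := ⟨(measure_ball_pos μ 0 hr).ne'⟩
  have : (μ.restrict (ball 0 r)).IsNegInvariant := isNegInvariant_restrict (by simp)
  have hL2 : MemLp id 2 (μ.restrict (ball 0 r)) := by
    refine .of_bound aestronglyMeasurable_id r ?_
    filter_upwards [ae_restrict_mem measurableSet_ball] with z hz
    exact (mem_ball_zero_iff.mp hz).le
  calc ⨍ y in ball x r, ‖y - x₀‖ ^ 2 ∂μ
    _ = ⨍ z in ball 0 r, ‖x - x₀ + z‖ ^ 2 ∂μ := by
      simp only [setAverage_ball_eq_setAverage_ball_zero μ r _ x, add_sub_right_comm]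
    _ = ‖x - x₀‖ ^ 2 + ⨍ z in ball 0 r, ‖z‖ ^ 2 ∂μ :=
      average_norm_add_sq hL2 (integral_id_eq_zero_of_isNegInvariant _) (x - x₀)
    _ = ‖x - x₀‖ ^ 2 + r ^ 2 * (finrank ℝ E / (finrank ℝ E + 2)) := by
      rw [setAverage_ball_norm_pow μ hr]; norm_num

variable (vol : Measure E) [vol.IsAddHaarMeasure] {ν : E → Measure E} {β ε : ℝ}

lemma stepMean_norm_sub_sq [Nontrivial E] (hε : 0 < ε) {x : E} [IsProbabilityMeasure (ν x)]
    (hL2 : MemLp id 2 (ν x)) (hmean : ∫ z, z ∂ν x = 0) (x₀ : E) :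
    stepMean vol ν β ε (fun y => ‖y - x₀‖ ^ 2) x = ‖x - x₀‖ ^ 2 +
      ((1 - β) * ∫ z, ‖z‖ ^ 2 ∂ν x + β * (finrank ℝ E / (finrank ℝ E + 2))) * ε ^ 2 := by
  have hjump : ∫ z, ‖x + ε • z - x₀‖ ^ 2 ∂ν x = ‖x - x₀‖ ^ 2 + ε ^ 2 * ∫ z, ‖z‖ ^ 2 ∂ν x := by
    have hadd := average_norm_add_sq (f := fun z => ε • z) (hL2.const_smul ε)
      (by rw [integral_smul, hmean, smul_zero]) (x - x₀)
    simpa only [average_eq_integral, norm_smul, mul_pow, Real.norm_eq_abs, sq_abs,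
      integral_const_mul, ← add_sub_right_comm] using hadd
  rw [stepMean, hjump, setAverage_ball_norm_sub_sq vol hε]
  ring

lemma stepMean_le_norm_sub_sq_add [Nontrivial E] (hε : 0 < ε) (hβ : β ∈ Icc (0 : ℝ) 1) {x x₀ : E}
    [IsProbabilityMeasure (ν x)] (hL2 : MemLp id 2 (ν x)) (hmean : ∫ z, z ∂ν x = 0) {s : ℝ}
    (hs : ∫ z, ‖z‖ ^ 2 ∂ν x ≤ s) {g : E → ℝ} (hg : 0 ≤ g) (hgle : ∀ y, g y ≤ ‖y - x₀‖ ^ 2) :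
    stepMean vol ν β ε g x ≤
      ‖x - x₀‖ ^ 2 + ((1 - β) * s + β * (finrank ℝ E / (finrank ℝ E + 2))) * ε ^ 2 := by
  have hν : Integrable (fun z => ‖x + ε • z - x₀‖ ^ 2) (ν x) := by
    simpa only [add_sub_right_comm] using
      integrable_norm_add_sq (f := fun z => ε • z) (hL2.const_smul ε) (x - x₀)
  have hvol : IntegrableOn (fun y => ‖y - x₀‖ ^ 2) (ball x ε) vol :=
    (ContinuousOn.integrableOn_compact (isCompact_closedBall x ε) (by fun_prop)).mono_set
      ball_subset_closedBall
  have h1β : 0 ≤ 1 - β := sub_nonneg.mpr hβ.2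
  calc stepMean vol ν β ε g x
    _ ≤ stepMean vol ν β ε (fun y => ‖y - x₀‖ ^ 2) x :=
      stepMean_mono_of_nonneg hβ hg hgle hν hvol
    _ = ‖x - x₀‖ ^ 2 +
        ((1 - β) * ∫ z, ‖z‖ ^ 2 ∂ν x + β * (finrank ℝ E / (finrank ℝ E + 2))) * ε ^ 2 :=
      stepMean_norm_sub_sq vol hε hL2 hmean x₀
    _ ≤ ‖x - x₀‖ ^ 2 + ((1 - β) * s + β * (finrank ℝ E / (finrank ℝ E + 2))) * ε ^ 2 := by gcongr

theorem supermartingale_dist_sq_general [Nontrivial E] (hε : 0 < ε) (hβ : β ∈ Icc (0 : ℝ) 1)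
    (hprob : ∀ x, IsProbabilityMeasure (ν x)) (hL2 : ∀ x, MemLp id 2 (ν x))
    (hmean : ∀ x, ∫ z, z ∂ν x = 0) {s : ℝ} (hs : ∀ x, ∫ z, ‖z‖ ^ 2 ∂ν x ≤ s)
    {Ω : Type*} {m0 : MeasurableSpace Ω} {μ : Measure Ω} [IsFiniteMeasure μ] {𝔉 : Filtration ℕ m0}
    {X : ℕ → Ω → E} (hadapted : Adapted 𝔉 X) {x₀ : E}
    (hX0 : Integrable (fun ω => ‖X 0 ω - x₀‖ ^ 2) μ)
    (hstep : ∀ (k : ℕ) (g : E → ℝ), Measurable g → (∃ M, ∀ y, |g y| ≤ M) →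
      μ[fun ω => g (X (k + 1) ω) | 𝔉 k] =ᵐ[μ] fun ω => stepMean vol ν β ε g (X k ω)) :
    Supermartingale
      (fun (k : ℕ) (ω : Ω) => ‖X k ω - x₀‖ ^ 2 -
        ((1 - β) * s + β * (finrank ℝ E / (finrank ℝ E + 2))) * k * ε ^ 2) 𝔉 μ := by
  have hV : Measurable fun y : E => ‖y - x₀‖ ^ 2 := by fun_prop
  simp_rw [mul_right_comm _ _ (ε ^ 2)]
  refine supermartingale_sub_mul_of_condExp_min_natCast_le
    (fun k => (hV.comp (hadapted k)).stronglyMeasurable) (fun k ω => sq_nonneg _) hX0 fun k n => ?_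
  have htrunc0 (y : E) : 0 ≤ min (‖y - x₀‖ ^ 2) (n : ℝ) := le_min (sq_nonneg _) n.cast_nonneg
  have hbdd (y : E) : |min (‖y - x₀‖ ^ 2) (n : ℝ)| ≤ n :=
    (abs_of_nonneg (htrunc0 y)).trans_le (min_le_right _ _)
  filter_upwards [hstep k _ (hV.min measurable_const) ⟨n, hbdd⟩] with ω hω
  exact hω.trans_le <| stepMean_le_norm_sub_sq_add vol hε hβ (hL2 _) (hmean _) (hs _) htrunc0
    fun y => min_le_left _ _

end Walk

/-- `|X_k − x₀|² − C k ε²` is a supermartingale for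
`C = αΛ² + β N/(N+2)`. -/
theorem supermartingale_dist_sq (N : ℕ) (hN : 1 ≤ N) (Λ β ε : ℝ) (hΛ : 1 ≤ Λ) (hε : 0 < ε)
    (hβ : β ∈ Set.Ioc (0 : ℝ) 1)
    (ν : EuclideanSpace ℝ (Fin N) → Measure (EuclideanSpace ℝ (Fin N)))
    (hprob : ∀ x, IsProbabilityMeasure (ν x))
    (hsupp : ∀ x, ν x (closedBall (0 : EuclideanSpace ℝ (Fin N)) Λ)ᶜ = 0)
    (hsymm : ∀ x (E : Set (EuclideanSpace ℝ (Fin N))), MeasurableSet E → ν x E = ν x (-E))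
    (hmeas : ∀ w : EuclideanSpace ℝ (Fin N) → ℝ, Measurable w → (∃ M, ∀ y, |w y| ≤ M) →
      Measurable fun x => ∫ z, w (x + z) ∂ν x)
    {Ωhat : Type} [m0 : MeasurableSpace Ωhat] (μ : Measure Ωhat) [IsProbabilityMeasure μ]
    (𝔉 : Filtration ℕ m0)
    (X : ℕ → Ωhat → EuclideanSpace ℝ (Fin N)) (hadapted : Adapted 𝔉 X)
    (x₀ : EuclideanSpace ℝ (Fin N)) (hX0 : ∀ᵐ ω ∂μ, X 0 ω = x₀)
    (hstep : ∀ (k : ℕ) (g : EuclideanSpace ℝ (Fin N) → ℝ), Measurable g →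
      (∃ M, ∀ y, |g y| ≤ M) →
      (μ[(fun ω => g (X (k + 1) ω)) | 𝔉 k]) =ᵐ[μ]
        fun ω => (1 - β) * ∫ z, g (X k ω + ε • z) ∂ν (X k ω) +
          β * ⨍ y in ball (X k ω) ε, g y) :
    Supermartingale
      (fun (k : ℕ) (ω : Ωhat) =>
        ‖X k ω - x₀‖ ^ 2 - ((1 - β) * Λ ^ 2 + β * ((N : ℝ) / (N + 2))) * k * ε ^ 2) 𝔉 μ := by
  have : Nonempty (Fin N) := ⟨⟨0, hN⟩⟩
  have hbound x : ∀ᵐ z ∂ν x, ‖z‖ ≤ Λ :=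
    (measure_eq_zero_iff_ae_notMem.mp (hsupp x)).mono fun z hz => by simpa using hz
  have hmean x : ∫ z, z ∂ν x = 0 :=
    have := isNegInvariant_of_forall_measure_eq (hsymm x)
    integral_id_eq_zero_of_isNegInvariant (ν x)
  have hint0 : Integrable (fun ω => ‖X 0 ω - x₀‖ ^ 2) μ :=
    (integrable_zero Ωhat ℝ μ).congr (hX0.mono fun ω hω => by simp [hω])
  simpa only [finrank_euclideanSpace_fin] using supermartingale_dist_sq_general volume hε
    (Set.Ioc_subset_Icc_self hβ) hprob (fun x => .of_bound aestronglyMeasurable_id Λ (hbound x))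
    hmean (fun x => integral_norm_sq_le_sq (hbound x)) hadapted hint0 hstep
end
end

section
/- Let Ω ⊂ ℝ^N be a bounded domain, g : ℝ^N ∖ Ω → ℝ a bounded Borel measurable function and f : Ω → ℝ a bounded Borel measurable function. There exists a constant C, depending only on N, β, ε, diam Ω, sup_Ω f and sup_{ℝ^N∖Ω} g (in particular independent of u and of the family (ν_x)), such that every bounded Borel measurable u : ℝ^N → ℝ with u = g on ℝ^N ∖ Ω which satisfies u(x) ≤ α ∫ u(x+εz) dν_x(z) + β ⨍_{B_ε(x)} u(y) dy + ε² f(x) for every x ∈ Ω, satisfies u ≤ C on ℝ^N. -/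
open MeasureTheory Metric

noncomputable section

/-!
The ball average alone forces a fixed fraction of the mass outwards: inside `ball x ε` there is a
ball of radius `ε / 4` all of whose points are more than `ε / 2` farther from a fixed centre than
`x` is, and it fills the fraction `4⁻ᴺ` of `ball x ε`. Bounding `u` by `S = sup u` everywhere else,
including under the measures `ν x`, one use of the inequality turns a bound `u ≤ b` far from the
centre into `u ≤ S - q (S - b) + F` one shell of width `ε / 2` further in, with `q = β 4⁻ᴺ`.
Starting from `u ≤ G` outside the domain and crossing `n` shells gives
`S ≤ S - qⁿ (S - G) + n F`, in which the unknown `S` is absorbed: `S ≤ G + n F / qⁿ`.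
-/

section Escape

variable {X : Type*} {D : Set X} {ρ u : X → ℝ} {δ q F G R S : ℝ}

/-- One-step improvement of upper bounds for `u` on `D`: if `u ≤ S` everywhere and `u ≤ b` at all
points that are more than `δ` higher than `x` as measured by the height `ρ`, then the bound `S` at
`x` improves by the fraction `q` of `S - b`, up to an additive error `F`. Probabilistically, a walk
started in `D` climbs by more than `δ` in one step with probability at least `q`. -/
def EscapeEstimate (ρ u : X → ℝ) (D : Set X) (δ q F : ℝ) : Prop :=
  ∀ x ∈ D, ∀ S b, (∀ y, u y ≤ S) → (∀ y, ρ x + δ < ρ y → u y ≤ b) → u x ≤ S - q * (S - b) + F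

lemma le_sub_pow_mul_add (hq₀ : 0 ≤ q) (hq₁ : q ≤ 1) (hF : 0 ≤ F) (hGS : G ≤ S) (n : ℕ) :
    G ≤ S - q ^ n * (S - G) + n * F := by
  have hpow : q ^ n * (S - G) ≤ S - G :=
    mul_le_of_le_one_left (sub_nonneg.2 hGS) (pow_le_one₀ hq₀ hq₁)
  have : 0 ≤ n * F := by positivity
  linarith

lemma EscapeEstimate.le_of_lt (h : EscapeEstimate ρ u D δ q F) (hq₀ : 0 ≤ q) (hq₁ : q ≤ 1)
    (hF : 0 ≤ F) (hS : ∀ y, u y ≤ S) (hGS : G ≤ S) (hG : ∀ x ∉ D, u x ≤ G)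
    (hR : ∀ x ∈ D, ρ x ≤ R) (n : ℕ) {x : X} (hx : R < ρ x + n * δ) :
    u x ≤ S - q ^ n * (S - G) + n * F := by
  induction n generalizing x with
  | zero =>
    have hxD : x ∉ D := fun hxD => (hR x hxD).not_gt (by simpa using hx)
    simpa using hG x hxD
  | succ n ih =>
    by_cases hxD : x ∈ D
    · have hstep := h x hxD S (S - q ^ n * (S - G) + n * F) hS fun y hy =>
        ih (by push_cast at hx; linarith)
      have herr : q * (n * F) ≤ n * F := mul_le_of_le_one_left (by positivity) hq₁
      calc u x ≤ S - q * (S - (S - q ^ n * (S - G) + n * F)) + F := hstep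
        _ = S - q ^ (n + 1) * (S - G) + q * (n * F) + F := by ring
        _ ≤ S - q ^ (n + 1) * (S - G) + (n + 1 : ℕ) * F := by push_cast; linarith
    · exact (hG x hxD).trans (le_sub_pow_mul_add hq₀ hq₁ hF hGS _)

theorem EscapeEstimate.le_add_div (h : EscapeEstimate ρ u D δ q F) (hq₀ : 0 < q) (hq₁ : q ≤ 1)
    (hF : 0 ≤ F) (hu : BddAbove (Set.range u)) (hG : ∀ x ∉ D, u x ≤ G)
    (hR : ∀ x ∈ D, ρ x ≤ R) {n : ℕ} (hn : ∀ x, R < ρ x + n * δ) (x : X) :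
    u x ≤ G + n * F / q ^ n := by
  have : Nonempty X := ⟨x⟩
  set S := max G (⨆ y, u y)
  have hS : ∀ y, u y ≤ S := fun y => le_max_of_le_right (le_ciSup hu y)
  have hGS : G ≤ S := le_max_left _ _
  have hself : S ≤ S - q ^ n * (S - G) + n * F :=
    max_le (le_sub_pow_mul_add hq₀.le hq₁ hF hGS n)
      (ciSup_le fun y => h.le_of_lt hq₀.le hq₁ hF hS hGS hG hR n (hn y))
  have habsorb : S - G ≤ n * F / q ^ n := by
    rw [le_div_iff₀ (by positivity)]
    linarith
  linarith [hS x]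

end Escape

lemma setAverage_le_of_le_on_subset {α : Type*} [MeasurableSpace α] {μ : Measure α} {s t : Set α}
    {f : α → ℝ} {S b : ℝ} (hs : MeasurableSet s) (ht : MeasurableSet t) (hts : t ⊆ s)
    (hμ₀ : μ s ≠ 0) (hμ : μ s ≠ ⊤) (hf : IntegrableOn f s μ) (hS : ∀ x ∈ s, f x ≤ S)
    (hb : ∀ x ∈ t, f x ≤ b) :
    ⨍ x in s, f x ∂μ ≤ S - μ.real t / μ.real s * (S - b) := by
  have hpos : 0 < μ.real s := ENNReal.toReal_pos hμ₀ hμ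
  have hle {v : Set α} {c : ℝ} (hv : MeasurableSet v) (hvs : v ⊆ s) (hc : ∀ x ∈ v, f x ≤ c) :
      ∫ x in v, f x ∂μ ≤ μ.real v * c :=
    (setIntegral_mono_on (hf.mono_set hvs)
      (integrableOn_const (measure_ne_top_of_subset hvs hμ)) hv hc).trans_eq (by simp)
  have hint : ∫ x in s, f x ∂μ ≤ μ.real t * b + (μ.real s - μ.real t) * S := by
    rw [← measureReal_sdiff hts ht hμ]
    linarith [setIntegral_sdiff ht hf hts, hle ht hts hb,
      hle (hs.diff ht) Set.sdiff_subset fun x hx => hS x hx.1]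
  rw [setAverage_eq, smul_eq_mul, inv_mul_le_iff₀ hpos]
  calc ∫ x in s, f x ∂μ ≤ μ.real t * b + (μ.real s - μ.real t) * S := hint
    _ = μ.real s * (S - μ.real t / μ.real s * (S - b)) := by field_simp; ring

lemma bddAbove_range_of_abs_le {α : Type*} {w : α → ℝ} (hw : ∃ M, ∀ y, |w y| ≤ M) :
    BddAbove (Set.range w) :=
  hw.imp fun _ hM => Set.forall_mem_range.2 fun y => (le_abs_self _).trans (hM y)

lemma exists_dist_eq_and_dist_eq_add {E : Type*} [NormedAddCommGroup E] [NormedSpace ℝ E]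
    [Nontrivial E] (x₀ x : E) {r : ℝ} (hr : 0 ≤ r) :
    ∃ c, dist c x = r ∧ dist c x₀ = dist x x₀ + r := by
  obtain ⟨v, hv, hray⟩ : ∃ v : E, ‖v‖ = r ∧ SameRay ℝ (x - x₀) v := by
    rcases eq_or_ne x x₀ with rfl | hne
    · obtain ⟨v, hv⟩ := exists_norm_eq E hr
      exact ⟨v, hv, by simp⟩
    · refine ⟨(r * ‖x - x₀‖⁻¹) • (x - x₀), ?_, SameRay.sameRay_nonneg_smul_right _ (by positivity)⟩
      simpa using norm_smul_inv_norm' (𝕜 := ℝ) hr (sub_ne_zero.2 hne)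
  refine ⟨x + v, by simpa, ?_⟩
  rw [dist_eq_norm, dist_eq_norm, add_sub_right_comm, hray.norm_add, hv]

lemma exists_subset_closedBall_diam {X : Type*} [PseudoMetricSpace X]
    [Nonempty X] {D : Set X} (hD : Bornology.IsBounded D) :
    ∃ x₀, D ⊆ closedBall x₀ (diam D) := by
  rcases D.eq_empty_or_nonempty with rfl | ⟨x₀, hx₀⟩
  · exact ⟨Classical.arbitrary X, Set.empty_subset _⟩
  · exact ⟨x₀, fun y hy => dist_le_diam_of_mem hD hy hx₀⟩

section DynamicProgramming

variable {E : Type*} [NormedAddCommGroup E] [NormedSpace ℝ E] [FiniteDimensional ℝ E]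
  [MeasurableSpace E] [BorelSpace E] {μ : Measure E} [μ.IsAddHaarMeasure]

open Module (finrank)

lemma addHaar_real_ball_mul_of_pos (x y : E) {r : ℝ} (hr : 0 < r) (s : ℝ) :
    μ.real (ball y (r * s)) = r ^ finrank ℝ E * μ.real (ball x s) := by
  simp only [measureReal_def, Measure.addHaar_ball_mul_of_pos μ y hr s,
    Measure.addHaar_ball_center μ x s, ENNReal.toReal_mul, ENNReal.toReal_ofReal (pow_pos hr _).le]

lemma setAverage_ball_le [Nontrivial E] {u : E → ℝ} {x x₀ : E} {ε S b : ℝ} (hε : 0 < ε)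
    (hu : IntegrableOn u (ball x ε) μ) (hS : ∀ y ∈ ball x ε, u y ≤ S)
    (hb : ∀ y, dist x x₀ + ε / 2 < dist y x₀ → u y ≤ b) :
    ⨍ y in ball x ε, u y ∂μ ≤ S - (1 / 4) ^ finrank ℝ E * (S - b) := by
  obtain ⟨c, hcx, hcx₀⟩ := exists_dist_eq_and_dist_eq_add x₀ x (r := 3 / 4 * ε) (by positivity)
  have hsub : ball c (1 / 4 * ε) ⊆ ball x ε := ball_subset_ball' (by linarith)
  have hfar : ∀ y ∈ ball c (1 / 4 * ε), dist x x₀ + ε / 2 < dist y x₀ := fun y hy => by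
    linarith [dist_triangle_left c x₀ y, mem_ball.1 hy]
  have hμ₀ : μ (ball x ε) ≠ 0 := (measure_ball_pos μ x hε).ne'
  have hratio : μ.real (ball c (1 / 4 * ε)) / μ.real (ball x ε) = (1 / 4) ^ finrank ℝ E := by
    rw [addHaar_real_ball_mul_of_pos x c (by norm_num), mul_div_assoc, div_self, mul_one]
    exact (ENNReal.toReal_pos hμ₀ measure_ball_lt_top.ne).ne'
  rw [← hratio]
  exact setAverage_le_of_le_on_subset measurableSet_ball measurableSet_ball hsub hμ₀
    measure_ball_lt_top.ne hu hS fun y hy => hb y (hfar y hy)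

theorem escapeEstimate_dist_of_subsolution [Nontrivial E] {β ε : ℝ} (hβ : β ∈ Set.Ioc (0 : ℝ) 1)
    (hε : 0 < ε) {ν : E → Measure E} [∀ x, IsProbabilityMeasure (ν x)] {D : Set E} {c u : E → ℝ}
    {F : ℝ} (hF : ∀ x ∈ D, c x ≤ F) (hu : Measurable u) (hu' : ∃ M, ∀ y, |u y| ≤ M)
    (hsub : ∀ x ∈ D, u x ≤ (1 - β) * ∫ z, u (x + ε • z) ∂ν x +
      β * ⨍ y in ball x ε, (u y + c x) ∂μ) (x₀ : E) :
    EscapeEstimate (dist · x₀) u D (ε / 2) (β * (1 / 4) ^ finrank ℝ E) (β * F) := by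
  obtain ⟨M, hM⟩ := hu'
  intro x hx S b hS hb
  have hjump : ∫ z, u (x + ε • z) ∂ν x ≤ S := by
    have hmeas : Measurable fun z => u (x + ε • z) :=
      hu.comp (by fun_prop : Continuous fun z => x + ε • z).measurable
    have hint : Integrable (fun z => u (x + ε • z)) (ν x) :=
      .of_bound hmeas.aestronglyMeasurable M (.of_forall fun z => hM _)
    simpa using integral_mono hint (integrable_const S) fun z => hS _
  have hball : ⨍ y in ball x ε, (u y + c x) ∂μ ≤
      S + c x - (1 / 4) ^ finrank ℝ E * (S + c x - (b + c x)) := by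
    have hint : IntegrableOn u (ball x ε) μ :=
      .of_bound measure_ball_lt_top hu.aestronglyMeasurable M (.of_forall fun y => hM y)
    exact setAverage_ball_le hε (hint.add (integrableOn_const measure_ball_lt_top.ne))
      (fun y _ => by gcongr; exact hS y) fun y hy => by gcongr; exact hb y hy
  calc u x ≤ (1 - β) * ∫ z, u (x + ε • z) ∂ν x + β * ⨍ y in ball x ε, (u y + c x) ∂μ := hsub x hx
    _ ≤ (1 - β) * S + β * (S + c x - (1 / 4) ^ finrank ℝ E * (S + c x - (b + c x))) :=
      add_le_add (mul_le_mul_of_nonneg_left hjump (sub_nonneg.2 hβ.2))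
        (mul_le_mul_of_nonneg_left hball hβ.1.le)
    _ = S - β * (1 / 4) ^ finrank ℝ E * (S - b) + β * c x := by ring
    _ ≤ S - β * (1 / 4) ^ finrank ℝ E * (S - b) + β * F := by
      gcongr
      exacts [hβ.1.le, hF x hx]

/-- The upper bound for subsolutions in dimension `N` on a domain of diameter `d`, with source at
most `s` and boundary values at most `t`; `n` is the number of shells of width `ε / 2` needed to
leave the domain. The source is weighted by `β` because it is added inside the ball average. -/
def subsolutionConst (N : ℕ) (β ε d s t : ℝ) : ℝ :=
  let n := ⌊d / (ε / 2)⌋₊ + 1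
  t + n * (β * (ε ^ 2 * max s 0)) / (β * (1 / 4) ^ N) ^ n

variable (μ) in
theorem subsolution_bound_general [Nontrivial E] {β ε : ℝ} (hβ : β ∈ Set.Ioc (0 : ℝ) 1)
    (hε : 0 < ε) (ν : E → Measure E) [∀ x, IsProbabilityMeasure (ν x)] {D : Set E}
    (hD : Bornology.IsBounded D) {g f u : E → ℝ} (hg : BddAbove (g '' Dᶜ))
    (hf : BddAbove (f '' D)) (hu : Measurable u) (hu' : ∃ M, ∀ y, |u y| ≤ M)
    (hug : ∀ x ∉ D, u x = g x)
    (hsub : ∀ x ∈ D, u x ≤ (1 - β) * ∫ z, u (x + ε • z) ∂ν x +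
      β * ⨍ y in ball x ε, (u y + ε ^ 2 * f x) ∂μ) (x : E) :
    u x ≤ subsolutionConst (finrank ℝ E) β ε (diam D) (sSup (f '' D)) (sSup (g '' Dᶜ)) := by
  obtain ⟨x₀, hx₀⟩ := exists_subset_closedBall_diam hD
  have hβ₀ : 0 < β := hβ.1
  have hsource : ∀ x ∈ D, ε ^ 2 * f x ≤ ε ^ 2 * max (sSup (f '' D)) 0 := fun x hx => by
    gcongr
    exact le_max_of_le_left (le_csSup hf (Set.mem_image_of_mem f hx))
  refine (escapeEstimate_dist_of_subsolution hβ hε hsource hu hu' hsub x₀).le_add_div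
    (by positivity) ?_ (by positivity) (bddAbove_range_of_abs_le hu') (fun y hy => ?_) hx₀
    (fun y => ?_) x
  · exact mul_le_one₀ hβ.2 (by positivity) (pow_le_one₀ (by norm_num) (by norm_num))
  · exact (hug y hy).trans_le (le_csSup hg (Set.mem_image_of_mem g hy))
  · have hcross := (div_lt_iff₀ (half_pos hε)).1 (Nat.lt_floor_add_one (diam D / (ε / 2)))
    push_cast
    linarith [dist_nonneg (x := y) (y := x₀)]

end DynamicProgramming

/-- uniform upper bound for bounded subsolutions of the DPP, with a constant
depending only on `N`, `β`, `ε`, `diam Ω`, `sup_Ω f` and `sup_{ℝᴺ∖Ω} g` (in particular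
independent of `u`, of `Λ` and of the family `ν`). -/
theorem subsolution_bound (N : ℕ) (hN : 1 ≤ N) (β ε : ℝ)
    (hβ : β ∈ Set.Ioc (0 : ℝ) 1) (hε : 0 < ε) :
    ∃ C : ℝ → ℝ → ℝ → ℝ,
      ∀ Λ : ℝ, 1 ≤ Λ →
      ∀ (ν : EuclideanSpace ℝ (Fin N) → Measure (EuclideanSpace ℝ (Fin N))),
        (∀ x, IsProbabilityMeasure (ν x)) →
        (∀ x, ν x (closedBall (0 : EuclideanSpace ℝ (Fin N)) Λ)ᶜ = 0) →
        (∀ x (E : Set (EuclideanSpace ℝ (Fin N))), MeasurableSet E → ν x E = ν x (-E)) →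
        (∀ w : EuclideanSpace ℝ (Fin N) → ℝ, Measurable w → (∃ M, ∀ y, |w y| ≤ M) →
          Measurable fun x => ∫ z, w (x + z) ∂ν x) →
      ∀ (D : Set (EuclideanSpace ℝ (Fin N))), IsOpen D → IsConnected D →
        Bornology.IsBounded D →
      ∀ g f u : EuclideanSpace ℝ (Fin N) → ℝ,
        Measurable g → (∃ M, ∀ y, |g y| ≤ M) →
        Measurable f → (∃ M, ∀ y, |f y| ≤ M) →
        Measurable u → (∃ M, ∀ y, |u y| ≤ M) →
        (∀ x ∉ D, u x = g x) →
        (∀ x ∈ D, u x ≤ (1 - β) * ∫ z, u (x + ε • z) ∂ν x +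
          β * ⨍ y in ball x ε, u y + ε ^ 2 * f x) →
        ∀ x, u x ≤ C (diam D) (sSup (f '' D)) (sSup (g '' Dᶜ)) := by
  have : NeZero N := ⟨Nat.one_le_iff_ne_zero.1 hN⟩
  refine ⟨subsolutionConst N β ε, fun Λ _ ν _ _ _ _ D _ _ hD g f u _ hg _ hf hu hu' hug hsub => ?_⟩
  simpa using subsolution_bound_general volume hβ hε ν hD
    ((bddAbove_range_of_abs_le hg).mono (Set.image_subset_range g _))
    ((bddAbove_range_of_abs_le hf).mono (Set.image_subset_range f _)) hu hu' hug hsub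
end
end
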